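/- For every prime m ≥ 2, there exist positive integers A and B with B < A such that b_4(An + B) ≡ 0 (mod m) for all nonnegative integers n. -/

import Mathlib

/-- `bReg k n` is the number of `k`-regular partitions of `n`,
i.e. partitions of `n` in which no part is divisible by `k`. -/
noncomputable def bReg (k n : ℕ) : ℕ :=
  (Finset.univ.filter fun p : n.Partition => ∀ i ∈ p.parts, ¬ k ∣ i).card


section Part1
open UpperHalfPlane ModularForm SlashInvariantForm Filter Asymptotics Function Complex
open scoped MatrixGroups Topology Real Manifold

namespace B4

lemma norm_qParam' {h : ℝ} (τ : ℍ) : ‖Periodic.qParam h (τ : ℂ)‖ = Real.exp (-2 * π * τ.im / h) := by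
  rw [Periodic.norm_qParam]; rfl

/-- A `q`-series with vanishing coefficients up to `B` decays. -/
lemma isBigO_of_hasSum {h : ℝ} (hh : 0 < h) {g : ℍ → ℂ} {c : ℕ → ℂ}
    (hg : ∀ τ : ℍ, HasSum (fun n ↦ c n * Periodic.qParam h τ ^ n) (g τ)) {B : ℕ}
    (hc : ∀ n < B, c n = 0) :
    g =O[atImInfty] fun τ ↦ Periodic.qParam h (τ : ℂ) ^ B := by
  set w0 := Periodic.qParam h (UpperHalfPlane.I : ℂ) with hw0
  have hw0n : w0 ≠ 0 := by simp [hw0, Periodic.qParam, Complex.exp_ne_zero]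
  have hs : Summable fun n ↦ ‖c n * w0 ^ n‖ := (hg UpperHalfPlane.I).summable.norm
  have hs2 : Summable fun n ↦ ‖c n * w0 ^ n‖ * ‖w0 ^ B‖⁻¹ := hs.mul_right _
  refine IsBigO.of_bound (∑' n, ‖c n * w0 ^ n‖ * ‖w0 ^ B‖⁻¹) ?_
  have : ∀ᶠ τ : ℍ in atImInfty, 1 ≤ τ.im := by
    rw [Filter.eventually_iff, atImInfty_mem]
    exact ⟨1, fun z hz ↦ hz⟩
  filter_upwards [this] with τ hτ
  set w := Periodic.qParam h (τ : ℂ) with hw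
  have hle : ‖w‖ ≤ ‖w0‖ := by
    rw [hw, hw0, norm_qParam', norm_qParam']
    apply Real.exp_le_exp.mpr
    apply div_le_div_of_nonneg_right _ hh.le
    simp only [UpperHalfPlane.I_im]
    nlinarith [Real.pi_pos]
  have hb : ∀ n, ‖c n * w ^ n‖ ≤ ‖c n * w0 ^ n‖ * ‖w0 ^ B‖⁻¹ * ‖w ^ B‖ := by
    intro n
    rcases lt_or_ge n B with hn | hn
    · simp [hc n hn]
    · obtain ⟨d, rfl⟩ := Nat.exists_eq_add_of_le hn
      have h0 : ‖w0‖ ≠ 0 := by simpa using hw0n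
      simp only [norm_mul, norm_pow, pow_add]
      have : ‖c (B + d)‖ * (‖w0‖ ^ B * ‖w0‖ ^ d) * (‖w0‖ ^ B)⁻¹ * ‖w‖ ^ B
        = ‖c (B + d)‖ * (‖w‖ ^ B * ‖w0‖ ^ d) := by field_simp
      rw [this]
      gcongr
  rw [← (hg τ).tsum_eq, ← tsum_mul_right]
  exact tsum_of_norm_bounded (hs2.mul_right _).hasSum hb

lemma coeff_eq_zero_of_isBigO {h : ℝ} (hh : 0 < h) {g : ℍ → ℂ} {c : ℕ → ℂ}
    (hg : ∀ τ : ℍ, HasSum (fun n ↦ c n * Periodic.qParam h τ ^ n) (g τ)) {B : ℕ}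
    (hO : g =O[atImInfty] fun τ ↦ Periodic.qParam h (τ : ℂ) ^ B) :
    ∀ n < B, c n = 0 := by
  intro n
  induction n using Nat.strong_induction_on with | _ n ih =>
  intro hn
  have hb : (fun τ : ℍ ↦ g τ - c n * Periodic.qParam h (τ : ℂ) ^ n) =O[atImInfty]
      fun τ ↦ Periodic.qParam h (τ : ℂ) ^ (n + 1) := by
    apply isBigO_of_hasSum hh (c := fun i ↦ c i - if i = n then c n else 0)
    · intro τ
      have := (hg τ).sub (hasSum_ite_eq n (c n * Periodic.qParam h (τ : ℂ) ^ n))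
      refine this.congr_fun ?_ |> fun h ↦ h
      intro i
      by_cases hi : i = n
      · subst hi; simp
      · simp [hi]
    · intro i hi
      by_cases hin : i = n
      · simp [hin]
      · simp [hin, ih i (by omega) (by omega)]
  have hq1 : ∀ᶠ τ : ℍ in atImInfty, ‖Periodic.qParam h (τ : ℂ)‖ ≤ 1 := by
    filter_upwards with τ
    exact (Periodic.norm_qParam_lt_one hh τ.im_pos).le
  have hg' : g =O[atImInfty] fun τ ↦ Periodic.qParam h (τ : ℂ) ^ (n + 1) := by
    refine hO.trans (IsBigO.of_bound 1 ?_)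
    filter_upwards [hq1] with τ hτ
    rw [norm_pow, norm_pow, one_mul]
    exact pow_le_pow_of_le_one (norm_nonneg _) hτ hn
  have h3 : (fun τ : ℍ ↦ c n * Periodic.qParam h (τ : ℂ) ^ n) =O[atImInfty]
      fun τ ↦ Periodic.qParam h (τ : ℂ) ^ (n + 1) := by
    simpa using hg'.sub hb
  have h4 : (fun _ : ℍ ↦ c n) =O[atImInfty] fun τ ↦ Periodic.qParam h (τ : ℂ) := by
    obtain ⟨C, hC⟩ := h3.bound
    refine IsBigO.of_bound C ?_
    filter_upwards [hC] with τ hτ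
    have hpos : 0 < ‖Periodic.qParam h (τ : ℂ) ^ n‖ := by
      simp [Periodic.qParam, Complex.exp_ne_zero]
    rw [pow_succ', norm_mul, norm_mul, ← mul_assoc] at hτ
    exact le_of_mul_le_mul_right hτ hpos
  have h5 : Tendsto (fun τ : ℍ ↦ Periodic.qParam h (τ : ℂ)) atImInfty (𝓝 0) :=
    qParam_tendsto_atImInfty hh
  have h6 := h4.trans_tendsto h5
  exact tendsto_nhds_unique (tendsto_const_nhds) h6 


/-- Existence of a Sturm bound. -/
theorem exists_sturm (𝒢 : Subgroup (GL (Fin 2) ℝ)) [𝒢.IsArithmetic] (k : ℤ)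
    (h : ℕ) (hh : 0 < h) :
    ∃ B : ℕ, ∀ (F : ModularForm 𝒢 k) (c : ℕ → ℂ),
      (∀ τ : ℍ, HasSum (fun n ↦ c n * Periodic.qParam h τ ^ n) (F τ)) →
      (∀ n < B, c n = 0) → F = 0 := by
  set K : ℤ := k * Nat.card (𝒮ℒ ⧸ 𝒢.subgroupOf 𝒮ℒ) with hK
  refine ⟨h * (K.toNat / 12 + 1), fun F c hF hc ↦ ?_⟩
  suffices hn : ModularForm.norm 𝒮ℒ F = 0 by
    simpa [ModularForm.norm_eq_zero_iff] using hn
  have hh' : (0 : ℝ) < h := by exact_mod_cast hh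
  have h1 := isBigO_of_hasSum hh' hF hc
  have hq : ∀ τ : ℍ, Periodic.qParam (h : ℝ) (τ : ℂ) ^ (h * (K.toNat / 12 + 1))
      = Periodic.qParam 1 (τ : ℂ) ^ (K.toNat / 12 + 1) := by
    intro τ
    rw [pow_mul]
    congr 1
    simp only [Periodic.qParam, ← Complex.exp_nat_mul]
    congr 1
    have : (h : ℂ) ≠ 0 := by exact_mod_cast hh.ne'
    push_cast
    field_simp
  simp_rw [hq] at h1
  have hnorm : (ModularForm.norm 𝒮ℒ F : ℍ → ℂ) =O[atImInfty]
      fun τ ↦ Periodic.qParam 1 (τ : ℂ) ^ (K.toNat / 12 + 1) := by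
    let := Fintype.ofFinite (𝒮ℒ ⧸ 𝒢.subgroupOf 𝒮ℒ)
    classical
    rw [ModularForm.coe_norm]
    have hsplit := Finset.mul_prod_erase Finset.univ
      (fun q : 𝒮ℒ ⧸ 𝒢.subgroupOf 𝒮ℒ ↦ quotientFunc F q) (Finset.mem_univ (QuotientGroup.mk 1))
    rw [← hsplit]
    have hA : quotientFunc F (QuotientGroup.mk (1 : 𝒮ℒ) : 𝒮ℒ ⧸ 𝒢.subgroupOf 𝒮ℒ) = F := by
      simp
    have hB : (∏ q ∈ Finset.univ.erase (QuotientGroup.mk (1 : 𝒮ℒ) : 𝒮ℒ ⧸ 𝒢.subgroupOf 𝒮ℒ),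
        quotientFunc F q) =O[atImInfty] (fun _ ↦ (1 : ℂ)) := by
      have : (fun _ : ℍ ↦ (1:ℂ)) = fun x ↦ ∏ q ∈ Finset.univ.erase
        (QuotientGroup.mk (1 : 𝒮ℒ) : 𝒮ℒ ⧸ 𝒢.subgroupOf 𝒮ℒ), (1 : ℂ) := by simp
      rw [this, Finset.prod_fn]
      refine IsBigO.finsetProd ?_
      refine Quotient.forall.mpr fun ⟨r, hr⟩ _ ↦ ?_
      obtain ⟨γ, rfl⟩ := hr
      have := ModularFormClass.bdd_at_infty_slash F γ⁻¹
      rw [IsBoundedAtImInfty, BoundedAtFilter] at this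
      refine IsBigO.trans ?_ (this.trans (IsBigO.of_bound 1 (by simp)))
      refine IsBigO.of_bound 1 (Eventually.of_forall fun τ ↦ ?_)
      rw [one_mul]
      apply le_of_eq
      congr 1
      change (quotientFunc F (QuotientGroup.mk _)) τ = _
      rw [quotientFunc_mk, ModularForm.SL_slash, map_inv]
      rfl
    rw [hA]
    have := h1.mul hB
    simp only [mul_one] at this
    exact this
  have hsum : ∀ τ : ℍ, HasSum (fun n ↦ (qExpansion 1 (ModularForm.norm 𝒮ℒ F)).coeff n *
      Periodic.qParam 1 τ ^ n) (ModularForm.norm 𝒮ℒ F τ) := by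
    intro τ
    simpa using ModularForm.hasSum_qExpansion (ModularForm.norm 𝒮ℒ F) one_pos (by simp) τ
  have hz := coeff_eq_zero_of_isBigO one_pos (by simpa using hsum) hnorm
  apply ModularForm.sturm_bound_levelOne
  refine lt_of_lt_of_le ?_ (PowerSeries.nat_le_order _ (K.toNat / 12 + 1) hz)
  exact_mod_cast Nat.lt_succ_self _

end B4
end Part1

section Part2
namespace B4

/-- The Hecke-type operator on sequences. -/
def hk {R : Type*} [CommRing R] (Q : ℕ) (P : R) (u : ℕ → R) : ℕ → R :=
  fun n ↦ u (Q * n) + P * (if Q ∣ n then u (n / Q) else 0)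

lemma hecke_seq {R : Type*} [CommRing R] {Q : ℕ} (hQ : 0 < Q) (P : R) (a : ℕ → R)
    (t : ℕ → ℕ → R) (h0 : t 0 = a) (h1 : t 1 = hk Q P a)
    (h2 : ∀ r, t (r + 2) = hk Q P (t (r + 1)) - P • t r) {n : ℕ} (hn : ¬ Q ∣ n) (r : ℕ) :
    t r n = a (Q ^ r * n) := by
  have key : ∀ r s, t (r + 1) (Q ^ (s + 1) * n) - P * t r (Q ^ s * n)
      = a (Q ^ (r + s + 2) * n) := by
    have e2 : ∀ s, Q * (Q ^ (s + 1) * n) = Q ^ (s + 2) * n := fun s ↦ by ring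
    have e3 : ∀ s, Q ^ (s + 1) * n / Q = Q ^ s * n := fun s ↦ by
      rw [pow_succ', mul_assoc, Nat.mul_div_cancel_left _ hQ]
    have e4 : ∀ s, Q ∣ Q ^ (s + 1) * n := fun s ↦ by rw [pow_succ', mul_assoc]; exact ⟨_, rfl⟩
    intro r
    induction r with
    | zero => intro s; simp [h0, h1, hk, e2, e3, e4]
    | succ r ih =>
      intro s
      have := ih (s + 1)
      rw [h2]
      simp only [Pi.sub_apply, Pi.smul_apply, smul_eq_mul, hk, e2, e3, e4, if_true]
      rw [show r + 1 + s + 2 = r + (s + 1) + 2 by ring, ← this]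
      ring
  match r with
  | 0 => simp [h0]
  | 1 => simp [h1, hk, hn]
  | r + 2 =>
    have := key r 0
    rw [h2]
    simp only [Pi.sub_apply, Pi.smul_apply, smul_eq_mul, hk, hn, if_false]
    simp at this
    rw [← this]; ring

theorem exists_vanish {m Q : ℕ} (hm : 0 < m) (hQ : 0 < Q) (P : ℤ)
    (hP : IsUnit (P : ZMod m)) (L : Submodule ℤ (ℕ → ℤ)) (B : ℕ)
    (hB : ∀ u ∈ L, (∀ n < B, u n = 0) → u = 0)
    (hL : ∀ u ∈ L, hk Q P u ∈ L) (a : ℕ → ℤ) (ha : a ∈ L) :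
    ∃ r, 0 < r ∧ ∀ n, ¬ Q ∣ n → (m : ℤ) ∣ a (Q ^ r * n) := by
  have : NeZero m := ⟨hm.ne'⟩
  have hfin : Module.Finite ℤ L := by
    let φ : L →ₗ[ℤ] (Fin B → ℤ) := (LinearMap.funLeft ℤ ℤ (fun i : Fin B ↦ (i : ℕ))) ∘ₗ L.subtype
    apply Module.Finite.of_injective φ
    rw [← LinearMap.ker_eq_bot, LinearMap.ker_eq_bot']
    intro u hu
    apply Subtype.ext
    refine hB u u.2 fun n hn ↦ ?_
    exact congr_fun hu ⟨n, hn⟩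
  let ρ : (ℕ → ℤ) →ₗ[ℤ] (ℕ → ZMod m) :=
    { toFun := fun u n ↦ (u n : ZMod m)
      map_add' := fun u v ↦ by ext; simp
      map_smul' := fun c u ↦ by ext; simp }
  let V := L.map ρ
  have hVfg : Module.Finite ℤ V := inferInstance
  have hVfin : Finite V := by
    have : AddGroup.FG V := by
      rw [← Module.Finite.iff_addGroup_fg]; exact hVfg
    apply AddCommGroup.finite_of_fg_isAddTorsion
    intro v
    rw [isOfFinAddOrder_iff_nsmul_eq_zero]
    refine ⟨m, hm, ?_⟩
    apply Subtype.ext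
    ext n
    simp
  have hρ : ∀ u, hk Q (P : ZMod m) (ρ u) = ρ (hk Q P u) := by
    intro u; ext n
    simp only [hk, ρ, LinearMap.coe_mk, AddHom.coe_mk]
    push_cast; split_ifs <;> simp
  have hVT : ∀ v : V, hk Q (P : ZMod m) v ∈ V := by
    rintro ⟨_, u, hu, rfl⟩
    exact ⟨_, hL u hu, (hρ u).symm⟩
  let Φ : V × V → V × V := fun p ↦ (⟨hk Q (P : ZMod m) p.1, hVT p.1⟩ - P • p.2, p.1)
  have hΦ : Function.Injective Φ := by
    rintro ⟨u, v⟩ ⟨u', v'⟩ h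
    simp only [Φ, Prod.mk.injEq] at h
    obtain ⟨h1, rfl⟩ := h
    have h1' := sub_right_injective h1
    have : v = v' := by
      apply Subtype.ext; ext n
      have := congr_fun (congr_arg Subtype.val h1') n
      simp at this
      exact hP.mul_left_cancel this
    rw [this]
  let e : Equiv.Perm (V × V) := Equiv.ofBijective Φ (Finite.injective_iff_bijective.mp hΦ)
  let p0 : V × V := (⟨ρ a, a, ha, rfl⟩, 0)
  let t : ℕ → ℕ → ZMod m := fun r ↦ (((e ^ r) p0).1 : ℕ → ZMod m)
  have hstep : ∀ r, (e ^ (r + 1)) p0 = Φ ((e ^ r) p0) := by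
    intro r; rw [pow_succ', Equiv.Perm.mul_apply]; rfl
  have hsnd : ∀ r, (((e ^ (r + 1)) p0).2 : ℕ → ZMod m) = t r := by
    intro r; rw [hstep]
  have h0 : t 0 = ρ a := rfl
  have h1 : t 1 = hk Q (P : ZMod m) (ρ a) := by
    change (((e ^ (0 + 1)) p0).1 : ℕ → ZMod m) = _
    rw [hstep]
    simp [Φ, p0]
  have h2 : ∀ r, t (r + 2) = hk Q (P : ZMod m) (t (r + 1)) - (P : ZMod m) • t r := by
    intro r
    change (((e ^ (r + 1 + 1)) p0).1 : ℕ → ZMod m) = _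
    rw [hstep]
    rw [← hsnd r]
    ext n
    simp [Φ, t]
  have hord : 0 < orderOf e := orderOf_pos e
  obtain ⟨s, hs⟩ : ∃ s, 2 * orderOf e = s + 2 := ⟨2 * orderOf e - 2, by omega⟩
  refine ⟨s + 1, by omega, fun n hn ↦ ?_⟩
  have hz : t (s + 1) = 0 := by
    rw [← hsnd, ← hs, mul_comm, pow_mul, pow_orderOf_eq_one]
    simp [p0]
  have := hecke_seq hQ (P : ZMod m) (ρ a) t h0 h1 h2 hn (s + 1)
  rw [hz] at this
  exact (ZMod.intCast_zmod_eq_zero_iff_dvd _ _).mp this.symm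

end B4
end Part2

section Part3
open UpperHalfPlane ModularForm SlashInvariantForm Filter Asymptotics Function Complex
open scoped MatrixGroups Topology Real Manifold Pointwise

namespace B4

/-- A nonsingular integer matrix as an element of `GL(2, ℝ)`. -/
noncomputable def gl (A : Matrix (Fin 2) (Fin 2) ℤ) (h : A.det ≠ 0) : GL (Fin 2) ℝ :=
  (Matrix.GeneralLinearGroup.mkOfDetNeZero (A.map (Int.castRingHom ℚ)) (by
    rw [← RingHom.mapMatrix_apply, ← RingHom.map_det]; simpa using h)).map (Rat.castHom ℝ)

lemma gl_apply (A : Matrix (Fin 2) (Fin 2) ℤ) (h : A.det ≠ 0) (i j : Fin 2) :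
    (gl A h) i j = (A i j : ℝ) := by
  simp [gl, Matrix.GeneralLinearGroup.mkOfDetNeZero]

lemma gl_det (A : Matrix (Fin 2) (Fin 2) ℤ) (h : A.det ≠ 0) :
    (gl A h).det.val = (A.det : ℝ) := by
  rw [Matrix.GeneralLinearGroup.val_det_apply, Matrix.det_fin_two, Matrix.det_fin_two]
  simp [gl_apply]

lemma gl_mul (A B : Matrix (Fin 2) (Fin 2) ℤ) (hA : A.det ≠ 0) (hB : B.det ≠ 0)
    (h : (A * B).det ≠ 0) : gl (A * B) h = gl A hA * gl B hB := by
  ext i j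
  simp [gl_apply, Matrix.mul_apply]

lemma gl_SL (γ : SL(2, ℤ)) (h : (γ : Matrix (Fin 2) (Fin 2) ℤ).det ≠ 0) :
    gl γ h = Matrix.SpecialLinearGroup.mapGL ℝ γ := by
  ext i j
  simp [gl_apply]

lemma holo_slash {F : ℍ → ℂ} (hF : MDiff F) (k : ℤ) (g : GL (Fin 2) ℝ) : MDiff (F ∣[k] g) :=
  hF.slash k g

/-- Boundedness at cusps of rational translates. -/
lemma bdd_slash_gl {𝒢 : Subgroup (GL (Fin 2) ℝ)} [𝒢.IsArithmetic] {k : ℤ} (F : ModularForm 𝒢 k)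
    (A : Matrix (Fin 2) (Fin 2) ℤ) (h : A.det ≠ 0) {c : OnePoint ℝ} (hc : IsCusp c 𝒢) :
    OnePoint.IsBoundedAt c (F ∣[k] gl A h) k := by
  have h1 : (ConjAct.toConjAct (gl A h)⁻¹ • 𝒢).IsArithmetic := by
    have := Subgroup.IsArithmetic.conj 𝒢 (Matrix.GeneralLinearGroup.mkOfDetNeZero
      (A.map (Int.castRingHom ℚ)) (by
        rw [← RingHom.mapMatrix_apply, ← RingHom.map_det]; simpa using h))⁻¹
    rwa [map_inv] at this
  have h2 : IsCusp c (ConjAct.toConjAct (gl A h)⁻¹ • 𝒢) := by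
    rw [Subgroup.IsArithmetic.isCusp_iff_isCusp_SL2Z] at hc ⊢
    exact hc
  exact (ModularForm.translate F (gl A h)).bdd_at_cusps' h2

section Hecke
variable (N Q : ℕ)

/-- Hecke representatives. -/
def al : Option (Fin Q) → Matrix (Fin 2) (Fin 2) ℤ
  | none => !![(Q : ℤ), 0; 0, 1]
  | some j => !![1, (N : ℤ) * j; 0, (Q : ℤ)]

lemma al_det (i : Option (Fin Q)) : (al N Q i).det = Q := by
  cases i <;> simp [al, Matrix.det_fin_two]

variable {N Q}

lemma al_det_ne (hQ : Q.Prime) (i : Option (Fin Q)) : (al N Q i).det ≠ 0 := by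
  rw [al_det]; exact_mod_cast hQ.ne_zero

lemma al_inj (hQ : Q.Prime) (hNQ : N.Coprime Q) (γ : SL(2, ℤ)) (i j : Option (Fin Q))
    (h : (γ : Matrix (Fin 2) (Fin 2) ℤ) * al N Q i = al N Q j) : i = j := by
  have h00 := congr_fun (congr_fun h 0) 0
  have h01 := congr_fun (congr_fun h 0) 1
  have h10 := congr_fun (congr_fun h 1) 0
  have h11 := congr_fun (congr_fun h 1) 1
  have hQ2 : (2 : ℤ) ≤ Q := by exact_mod_cast hQ.two_le
  have hu : ¬ IsUnit (Q : ℤ) := by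
    rw [Int.isUnit_iff]; omega
  rcases i with _ | i <;> rcases j with _ | j <;>
    simp [al, Matrix.mul_apply, Fin.sum_univ_two] at h00 h01 h10 h11 ⊢
  · exact hu (isUnit_of_dvd_one ⟨_, (mul_comm _ _).trans h00 |>.symm⟩)
  · rw [h10] at h11
    simp at h11
    exact hu (isUnit_of_dvd_one ⟨_, (mul_comm _ _).trans h11 |>.symm⟩)
  · rw [h00] at h01
    have hd : (Q : ℤ) ∣ N * ((j : ℤ) - i) := ⟨γ 0 1, by linear_combination -h01⟩
    have hc : IsCoprime (Q : ℤ) N := by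
      rw [Int.isCoprime_iff_gcd_eq_one]; simpa using hNQ.symm
    have := hc.dvd_of_dvd_mul_left hd
    have hi := i.2
    have hj := j.2
    have h0 : ((j : ℤ) - i) = 0 := by
      apply Int.eq_zero_of_abs_lt_dvd this
      rw [abs_lt]; omega
    ext; omega

lemma al_surj (hQ : Q.Prime) (hNQ : N.Coprime Q) (hQN : (Q : ZMod N) = 1)
    (A : Matrix (Fin 2) (Fin 2) ℤ) (hA : A.det = Q)
    (hA1 : A.map (Int.castRingHom (ZMod N)) = 1) :
    ∃ i, ∃ γ : SL(2, ℤ), γ ∈ CongruenceSubgroup.Gamma N ∧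
      A = (γ : Matrix (Fin 2) (Fin 2) ℤ) * al N Q i := by
  have a00 : ((A 0 0 : ℤ) : ZMod N) = 1 := by simpa using congr_fun (congr_fun hA1 0) 0
  have a01 : ((A 0 1 : ℤ) : ZMod N) = 0 := by simpa using congr_fun (congr_fun hA1 0) 1
  have a10 : ((A 1 0 : ℤ) : ZMod N) = 0 := by simpa using congr_fun (congr_fun hA1 1) 0
  have a11 : ((A 1 1 : ℤ) : ZMod N) = 1 := by simpa using congr_fun (congr_fun hA1 1) 1
  have hQ0 : (Q : ℤ) ≠ 0 := by exact_mod_cast hQ.ne_zero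
  have hQp : Prime (Q : ℤ) := Nat.prime_iff_prime_int.mp hQ
  rw [Matrix.det_fin_two] at hA
  by_cases hcase : (Q : ℤ) ∣ A 0 0 ∧ (Q : ℤ) ∣ A 1 0
  · obtain ⟨⟨a, ha⟩, ⟨c, hc⟩⟩ := hcase
    refine ⟨none, ⟨!![a, A 0 1; c, A 1 1], ?_⟩, ?_, ?_⟩
    · rw [Matrix.det_fin_two]; simp
      apply mul_left_cancel₀ hQ0
      rw [ha, hc] at hA
      linear_combination hA
    · refine CongruenceSubgroup.Gamma_mem.mpr ?_
      rw [ha] at a00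
      rw [hc] at a10
      simp [hQN] at a00 a10
      simp [a00, a10, a01, a11]
    · ext i j; fin_cases i <;> fin_cases j <;> simp [al, Matrix.mul_apply, Fin.sum_univ_two]
      · rw [ha]; ring
      · rw [hc]; ring
  · -- find j
    have hj : ∃ j : Fin Q, (Q : ℤ) ∣ A 0 1 - A 0 0 * (N * j) ∧ (Q : ℤ) ∣ A 1 1 - A 1 0 * (N * j) := by
      have : Fact Q.Prime := ⟨hQ⟩
      have hN0 : (N : ZMod Q) ≠ 0 := by
        intro h
        rw [ZMod.natCast_eq_zero_iff] at h
        exact hQ.one_lt.ne' (Nat.dvd_one.mp (hNQ ▸ Nat.dvd_gcd h dvd_rfl))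
      have hdet : ((A 0 0 : ℤ) : ZMod Q) * (A 1 1 : ℤ) - (A 0 1 : ℤ) * (A 1 0 : ℤ) = 0 := by
        have := congr_arg (Int.cast : ℤ → ZMod Q) hA
        simpa using this
      have hx : ∃ x : ZMod Q, ((A 0 1 : ℤ) : ZMod Q) = (A 0 0 : ℤ) * (N * x) ∧
          ((A 1 1 : ℤ) : ZMod Q) = (A 1 0 : ℤ) * (N * x) := by
        by_cases h0 : ((A 0 0 : ℤ) : ZMod Q) = 0
        · have h1 : ((A 1 0 : ℤ) : ZMod Q) ≠ 0 := by
            intro h1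
            exact hcase ⟨(ZMod.intCast_zmod_eq_zero_iff_dvd _ _).mp h0,
              (ZMod.intCast_zmod_eq_zero_iff_dvd _ _).mp h1⟩
          refine ⟨(A 1 1 : ℤ) * ((A 1 0 : ℤ) : ZMod Q)⁻¹ * (N : ZMod Q)⁻¹, ?_, ?_⟩
          · rw [h0] at hdet ⊢
            simp [h1] at hdet
            simp [hdet]
          · field_simp
        · refine ⟨(A 0 1 : ℤ) * ((A 0 0 : ℤ) : ZMod Q)⁻¹ * (N : ZMod Q)⁻¹, ?_, ?_⟩
          · field_simp
          · field_simp
            linear_combination hdet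
      obtain ⟨x, hx1, hx2⟩ := hx
      refine ⟨⟨x.val, x.val_lt⟩, ?_, ?_⟩
      · rw [← ZMod.intCast_zmod_eq_zero_iff_dvd]
        push_cast
        rw [ZMod.natCast_zmod_val, hx1, sub_self]
      · rw [← ZMod.intCast_zmod_eq_zero_iff_dvd]
        push_cast
        rw [ZMod.natCast_zmod_val, hx2, sub_self]
    obtain ⟨j, ⟨b, hb⟩, ⟨d, hd⟩⟩ := hj
    have hb' := congr_arg (Int.cast : ℤ → ZMod N) hb
    have hd' := congr_arg (Int.cast : ℤ → ZMod N) hd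
    simp [a00, a01, a10, a11, hQN] at hb' hd'
    refine ⟨some j, ⟨!![A 0 0, b; A 1 0, d], ?_⟩, ?_, ?_⟩
    · rw [Matrix.det_fin_two]; simp
      apply mul_left_cancel₀ hQ0
      linear_combination hA - A 0 0 * hd + A 1 0 * hb
    · refine CongruenceSubgroup.Gamma_mem.mpr ?_
      simp [a00, a10, ← hb', ← hd']
    · ext i j; fin_cases i <;> fin_cases j <;> simp [al, Matrix.mul_apply, Fin.sum_univ_two]
      · linear_combination hb
      · linear_combination hd

end Hecke
end B4
end Part3

section Part4
open UpperHalfPlane ModularForm SlashInvariantForm Filter Asymptotics Function Complex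
open scoped MatrixGroups Topology Real Manifold Pointwise

namespace B4

lemma sum_exp_root {D : ℕ} (hD : 0 < D) (n : ℤ) :
    ∑ j ∈ Finset.range D, Complex.exp (2 * π * Complex.I * (n * j / D)) = if (D : ℤ) ∣ n then (D : ℂ) else 0 := by
  have hD0 : (D : ℂ) ≠ 0 := by exact_mod_cast hD.ne'
  set x := Complex.exp (2 * π * Complex.I * (n / D)) with hx
  have h1 : ∀ j : ℕ, Complex.exp (2 * π * Complex.I * (n * j / D)) = x ^ j := by
    intro j; rw [hx, ← Complex.exp_nat_mul]; congr 1; ring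
  simp_rw [h1]
  split_ifs with h
  · obtain ⟨e, rfl⟩ := h
    have : x = 1 := by
      rw [hx, Complex.exp_eq_one_iff]
      refine ⟨e, ?_⟩
      push_cast; field_simp
    simp [this]
  · have hxD : x ^ D = 1 := by
      rw [hx, ← Complex.exp_nat_mul, Complex.exp_eq_one_iff]
      exact ⟨n, by field_simp⟩
    have hx1 : x ≠ 1 := by
      intro hx1
      rw [hx, Complex.exp_eq_one_iff] at hx1
      obtain ⟨e, he⟩ := hx1
      apply h
      refine ⟨e, ?_⟩
      have h2 : (2 * π * Complex.I : ℂ) ≠ 0 := Complex.two_pi_I_ne_zero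
      have : (n : ℂ) / D = e := by
        apply mul_left_cancel₀ h2; rw [he]; ring
      field_simp at this
      exact_mod_cast this
    have := mul_geom_sum x D
    rw [hxD, sub_self] at this
    exact (mul_eq_zero.mp this).resolve_left (sub_ne_zero.mpr hx1)

/-- `Γ(N)` as a subgroup of `GL(2, ℝ)`. -/
noncomputable abbrev GN (N : ℕ) : Subgroup (GL (Fin 2) ℝ) :=
  (CongruenceSubgroup.Gamma N).map (Matrix.SpecialLinearGroup.mapGL ℝ)

instance (N : ℕ) [NeZero N] : (GN N).IsArithmetic := inferInstance

lemma exists_hecke {N Q : ℕ} [NeZero N] (hQ : Q.Prime) (hNQ : N.Coprime Q) (hQN : (Q : ZMod N) = 1)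
    (k : ℤ) (F : ModularForm (GN N) k) : ∃ G : ModularForm (GN N) k,
      (G : ℍ → ℂ) = ∑ i : Option (Fin Q), (F : ℍ → ℂ) ∣[k] gl (al N Q i) (al_det_ne hQ i) := by
  refine ⟨⟨⟨∑ i : Option (Fin Q), (F : ℍ → ℂ) ∣[k] gl (al N Q i) (al_det_ne hQ i), ?_⟩, ?_, ?_⟩, rfl⟩
  · rintro _ ⟨δ, hδ, rfl⟩
    have hal : ∀ i, (al N Q i).map (Int.castRingHom (ZMod N)) = 1 := by
      intro i
      ext a b
      cases i <;> fin_cases a <;> fin_cases b <;> simp [al, hQN]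
    have hδ1 : (δ : Matrix (Fin 2) (Fin 2) ℤ).map (Int.castRingHom (ZMod N)) = 1 := by
      have hδ' := CongruenceSubgroup.Gamma_mem.mp hδ
      ext a b
      fin_cases a <;> fin_cases b <;> simp [hδ']
    have hex : ∀ i, ∃ i', ∃ γ : SL(2, ℤ), γ ∈ CongruenceSubgroup.Gamma N ∧
        al N Q i * (δ : Matrix (Fin 2) (Fin 2) ℤ) = (γ : Matrix (Fin 2) (Fin 2) ℤ) * al N Q i' := by
      intro i
      apply al_surj hQ hNQ hQN
      · rw [Matrix.det_mul, al_det]; simp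
      · rw [Matrix.map_mul, hal, hδ1, one_mul]
    choose p γ hγ hp using hex
    have hinj : Function.Injective p := by
      intro i j hij
      apply al_inj hQ hNQ (γ j * (γ i)⁻¹) i j
      have h1 := hp i
      have h2 := hp j
      rw [← hij] at h2
      have hu : (γ i : Matrix (Fin 2) (Fin 2) ℤ) * ((γ i)⁻¹ : SL(2, ℤ)) = 1 := by
        rw [← Matrix.SpecialLinearGroup.coe_mul]; simp
      have hu' : (((γ i)⁻¹ : SL(2, ℤ)) : Matrix (Fin 2) (Fin 2) ℤ) * (γ i) = 1 := by
        rw [← Matrix.SpecialLinearGroup.coe_mul]; simp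
      have hv : (δ : Matrix (Fin 2) (Fin 2) ℤ) * ((δ)⁻¹ : SL(2, ℤ)) = 1 := by
        rw [← Matrix.SpecialLinearGroup.coe_mul]; simp
      calc ((γ j * (γ i)⁻¹ : SL(2, ℤ)) : Matrix (Fin 2) (Fin 2) ℤ) * al N Q i
          = (γ j : Matrix (Fin 2) (Fin 2) ℤ) * ((γ i)⁻¹ : SL(2, ℤ)) * (al N Q i * (δ * (δ⁻¹ : SL(2, ℤ)))) := by
            rw [hv, Matrix.SpecialLinearGroup.coe_mul, mul_one]
        _ = (γ j : Matrix (Fin 2) (Fin 2) ℤ) * ((((γ i)⁻¹ : SL(2, ℤ)) * (γ i)) * al N Q (p i)) * (δ⁻¹ : SL(2, ℤ)) := by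
            rw [← mul_assoc (al N Q i), h1]; simp only [mul_assoc]
        _ = al N Q j * (δ * (δ⁻¹ : SL(2, ℤ))) := by
            rw [hu', one_mul, ← h2]; simp only [mul_assoc]
        _ = al N Q j := by rw [hv, mul_one]
    have hbij := Finite.injective_iff_bijective.mp hinj
    change (∑ i : Option (Fin Q), (F : ℍ → ℂ) ∣[k] gl (al N Q i) (al_det_ne hQ i)) ∣[k]
      (Matrix.SpecialLinearGroup.mapGL ℝ δ) = _
    rw [SlashAction.sum_slash]
    refine Eq.trans ?_ (Equiv.sum_comp (Equiv.ofBijective p hbij)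
      (fun i ↦ (F : ℍ → ℂ) ∣[k] gl (al N Q i) (al_det_ne hQ i)))
    refine Finset.sum_congr rfl fun i _ ↦ ?_
    rw [← SlashAction.slash_mul]
    have hδd : (δ : Matrix (Fin 2) (Fin 2) ℤ).det ≠ 0 := by simp
    have hγd : (γ i : Matrix (Fin 2) (Fin 2) ℤ).det ≠ 0 := by simp
    have e : gl (al N Q i) (al_det_ne hQ i) * Matrix.SpecialLinearGroup.mapGL ℝ δ
        = Matrix.SpecialLinearGroup.mapGL ℝ (γ i) * gl (al N Q (p i)) (al_det_ne hQ (p i)) := by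
      rw [← gl_SL δ hδd, ← gl_SL (γ i) hγd, ← gl_mul _ _ _ _ (by
        rw [Matrix.det_mul]; exact mul_ne_zero (al_det_ne hQ i) hδd), ← gl_mul _ _ _ _ (by
        rw [Matrix.det_mul]; exact mul_ne_zero hγd (al_det_ne hQ _))]
      congr 1
      exact hp i
    rw [e, SlashAction.slash_mul, SlashInvariantForm.slash_action_eqn (Γ := GN N) F _
      (Subgroup.mem_map_of_mem _ (hγ i))]
    rfl
  · change MDiff (∑ i : Option (Fin Q), (F : ℍ → ℂ) ∣[k] gl (al N Q i) (al_det_ne hQ i))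
    exact MDifferentiable.sum fun i _ ↦ holo_slash F.holo' k _
  · intro c hc
    change OnePoint.IsBoundedAt c (∑ i : Option (Fin Q), (F : ℍ → ℂ) ∣[k] gl (al N Q i) (al_det_ne hQ i)) k
    induction (Finset.univ : Finset (Option (Fin Q))) using Finset.induction_on with
    | empty =>
      simp only [Finset.sum_empty]
      exact (0 : ModularForm (GN N) k).bdd_at_cusps' hc
    | insert a s has ih =>
      rw [Finset.sum_insert has]
      exact (bdd_slash_gl F _ _ hc).add ih

end B4
end Part4

section Part5
open UpperHalfPlane ModularForm SlashInvariantForm Filter Asymptotics Function Complex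
open scoped MatrixGroups Topology Real Manifold Pointwise

namespace B4

lemma coe_gl_smul (A : Matrix (Fin 2) (Fin 2) ℤ) (h : A.det ≠ 0) (hpos : 0 < A.det) (τ : ℍ) :
    ((gl A h • τ : ℍ) : ℂ) = (A 0 0 * τ + A 0 1) / (A 1 0 * τ + A 1 1) := by
  rw [UpperHalfPlane.coe_smul_of_det_pos (by rw [gl_det]; exact_mod_cast hpos)]
  simp [num, denom, gl_apply]

lemma slash_gl_apply (k : ℤ) (F : ℍ → ℂ) (A : Matrix (Fin 2) (Fin 2) ℤ) (h : A.det ≠ 0)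
    (hpos : 0 < A.det) (τ : ℍ) :
    (F ∣[k] gl A h) τ = F (gl A h • τ) * (A.det : ℂ) ^ (k - 1) * (A 1 0 * τ + A 1 1 : ℂ) ^ (-k) := by
  have h1 : (0:ℝ) < (gl A h).det.val := by rw [gl_det]; exact_mod_cast hpos
  rw [ModularForm.slash_apply, gl_det, abs_of_pos (by exact_mod_cast hpos)]
  simp [σ, denom, gl_apply, -Matrix.GeneralLinearGroup.val_det_apply, h1]

/-- Dilating a power series. -/
lemma hasSum_dilate {Q : ℕ} (hQ : 0 < Q) (c : ℕ → ℂ) (w v : ℂ)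
    (h : HasSum (fun n ↦ c n * (w ^ Q) ^ n) v) :
    HasSum (fun n ↦ (if Q ∣ n then c (n / Q) else 0) * w ^ n) v := by
  have hinj : Function.Injective (fun n : ℕ ↦ Q * n) := fun a b hab ↦ Nat.eq_of_mul_eq_mul_left hQ hab
  rw [← hinj.hasSum_iff]
  · refine h.congr_fun ?_ |> fun h ↦ h
    intro n
    simp [Nat.mul_div_cancel_left _ hQ, pow_mul]
  · intro n hn
    have : ¬ Q ∣ n := fun ⟨d, hd⟩ ↦ hn ⟨d, hd.symm⟩
    simp [this]

lemma hasSum_hecke {N Q : ℕ} [NeZero N] (hQ : Q.Prime) {k : ℕ} (hk : 0 < k) (F : ℍ → ℂ)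
    (c : ℕ → ℂ) (hF : ∀ τ : ℍ, HasSum (fun n ↦ c n * Periodic.qParam N τ ^ n) (F τ)) (τ : ℍ) :
    HasSum (fun n ↦ B4.hk Q ((Q : ℂ) ^ (k - 1)) c n * Periodic.qParam N τ ^ n)
      ((∑ i : Option (Fin Q), F ∣[(k : ℤ)] gl (al N Q i) (al_det_ne hQ i)) τ) := by
  have hQ0 : (Q : ℂ) ≠ 0 := by exact_mod_cast hQ.ne_zero
  have hN0 : (N : ℂ) ≠ 0 := by exact_mod_cast NeZero.ne N
  have hdet : ∀ i, 0 < (al N Q i).det := by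
    intro i; rw [al_det]; exact_mod_cast hQ.pos
  rw [Finset.sum_apply, Fintype.sum_option]
  -- the `∞` term
  have h1 : HasSum (fun n ↦ (Q : ℂ) ^ (k - 1) * (if Q ∣ n then c (n / Q) else 0) * Periodic.qParam N τ ^ n)
      ((F ∣[(k : ℤ)] gl (al N Q none) (al_det_ne hQ none)) τ) := by
    rw [slash_gl_apply _ _ _ _ (hdet _)]
    have h2 := hF (gl (al N Q none) (al_det_ne hQ none) • τ)
    have e : Periodic.qParam N ((gl (al N Q none) (al_det_ne hQ none) • τ : ℍ) : ℂ)
        = Periodic.qParam N τ ^ Q := by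
      rw [coe_gl_smul _ _ (hdet _)]
      simp only [Periodic.qParam, ← Complex.exp_nat_mul]
      congr 1
      simp [al]; ring
    rw [e] at h2
    have h3 := (hasSum_dilate hQ.pos _ _ _ h2).mul_left ((Q : ℂ) ^ (k - 1))
    convert! h3 using 1
    · ext n; ring
    · rw [al_det]
      simp [al]
      rw [mul_comm]; congr 1
      rw [← Nat.cast_pred hk, zpow_natCast]
  have h4 : HasSum (fun n ↦ c (Q * n) * Periodic.qParam N τ ^ n)
      (∑ j : Fin Q, (F ∣[(k : ℤ)] gl (al N Q (some j)) (al_det_ne hQ (some j))) τ) := by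
    set w := Complex.exp (2 * π * Complex.I * τ / (N * Q)) with hw
    have h5 : ∀ j : Fin Q, HasSum (fun n ↦ (Q : ℂ)⁻¹ * (c n * (w ^ n * Complex.exp (2 * π * Complex.I * ((n : ℤ) * (j : ℕ) / Q)))))
        ((F ∣[(k : ℤ)] gl (al N Q (some j)) (al_det_ne hQ (some j))) τ) := by
      intro j
      rw [slash_gl_apply _ _ _ _ (hdet _)]
      have h2 := (hF (gl (al N Q (some j)) (al_det_ne hQ (some j)) • τ)).mul_left ((Q : ℂ)⁻¹)
      convert! h2 using 1
      · ext n
        congr 2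
        rw [hw, coe_gl_smul _ _ (hdet _)]
        simp only [Periodic.qParam, ← Complex.exp_nat_mul, ← Complex.exp_add]
        congr 1
        simp [al]
        field_simp
      · rw [al_det]
        have e1 : (((al N Q (some j)) 1 0 : ℤ) : ℂ) = 0 := by simp [al]
        have e2 : (((al N Q (some j)) 1 1 : ℤ) : ℂ) = Q := by simp [al]
        rw [e1, e2, zero_mul, zero_add, Int.cast_natCast, mul_assoc, ← zpow_add₀ hQ0, mul_comm]
        congr 1
        rw [show (k : ℤ) - 1 + -k = -1 by ring, zpow_neg_one]
    have h6 := hasSum_sum (s := Finset.univ) fun j _ ↦ h5 j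
    have h7 : ∀ n : ℕ, ∑ j : Fin Q, (Q : ℂ)⁻¹ * (c n * (w ^ n * Complex.exp (2 * π * Complex.I * ((n : ℤ) * (j : ℕ) / Q))))
        = if Q ∣ n then c n * w ^ n else 0 := by
      intro n
      have := sum_exp_root hQ.pos (n : ℤ)
      rw [← Fin.sum_univ_eq_sum_range (fun j ↦ Complex.exp (2 * π * Complex.I * ((n : ℤ) * (j : ℕ) / Q)))] at this
      simp_rw [← Finset.mul_sum]
      rw [this]
      simp only [Int.natCast_dvd_natCast]
      split_ifs
      · field_simp
      · simp
    simp_rw [h7] at h6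
    have hinj : Function.Injective (fun n : ℕ ↦ Q * n) :=
      fun a b hab ↦ Nat.eq_of_mul_eq_mul_left hQ.pos hab
    rw [← hinj.hasSum_iff] at h6
    · convert! h6 using 1
      ext n
      simp
      left
      rw [pow_mul, hw, Periodic.qParam]
      congr 1
      rw [← Complex.exp_nat_mul]
      congr 1
      push_cast
      field_simp
    · intro n hn
      have : ¬ Q ∣ n := fun ⟨d, hd⟩ ↦ hn ⟨d, hd.symm⟩
      simp [this]
  convert! h1.add h4 using 1
  ext n
  simp only [B4.hk]
  ring

end B4
end Part5

section Part6
open UpperHalfPlane ModularForm SlashInvariantForm Filter Asymptotics Function Complex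
open scoped MatrixGroups Topology Real Manifold Pointwise

namespace B4

lemma coeff_eq_zero_of_hasSum_zero {h : ℝ} (hh : 0 < h) {c : ℕ → ℂ}
    (hg : ∀ τ : ℍ, HasSum (fun n ↦ c n * Periodic.qParam h τ ^ n) 0) : c = 0 := by
  ext n
  exact coeff_eq_zero_of_isBigO (B := n + 1) hh (g := fun _ ↦ 0) hg (isBigO_zero _ _) n (by omega)

theorem hecke_main {N m Q k : ℕ} [NeZero N] (hm : 0 < m) (hk : 0 < k) (hQ : Q.Prime)
    (hNQ : N.Coprime Q) (hmQ : m.Coprime Q) (hQN : (Q : ZMod N) = 1)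
    (F : ModularForm (GN N) (k : ℤ)) (a : ℕ → ℤ)
    (hF : ∀ τ : ℍ, HasSum (fun n ↦ (a n : ℂ) * Periodic.qParam N τ ^ n) (F τ)) :
    ∃ r, 0 < r ∧ ∀ n, ¬ Q ∣ n → (m : ℤ) ∣ a (Q ^ r * n) := by
  have hN : 0 < N := Nat.pos_of_ne_zero (NeZero.ne N)
  have hN' : (0 : ℝ) < N := by exact_mod_cast hN
  obtain ⟨B, hB⟩ := exists_sturm (GN N) k N hN
  let L : Submodule ℤ (ℕ → ℤ) :=
    { carrier := {u | ∃ G : ModularForm (GN N) (k : ℤ), ∀ τ : ℍ,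
        HasSum (fun n ↦ (u n : ℂ) * Periodic.qParam N τ ^ n) (G τ)}
      add_mem' := by
        rintro u v ⟨G, hG⟩ ⟨H, hH⟩
        refine ⟨G + H, fun τ ↦ ?_⟩
        convert! (hG τ).add (hH τ) using 1
        ext n; simp; ring
      zero_mem' := ⟨0, fun τ ↦ by simp⟩
      smul_mem' := by
        rintro c u ⟨G, hG⟩
        refine ⟨(c : ℂ) • G, fun τ ↦ ?_⟩
        convert! (hG τ).mul_left (c : ℂ) using 1
        ext n; simp; ring }
  apply exists_vanish hm hQ.pos ((Q : ℤ) ^ (k - 1)) ?_ L B ?_ ?_ a ⟨F, hF⟩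
  · push_cast
    apply IsUnit.pow
    rw [ZMod.isUnit_iff_coprime]
    exact hmQ.symm
  · rintro u ⟨G, hG⟩ hu
    have hG0 := hB G _ hG (by intro n hn; simp [hu n hn])
    have := coeff_eq_zero_of_hasSum_zero hN' (c := fun n ↦ (u n : ℂ)) (by
      intro τ; have := hG τ; rw [hG0] at this; exact this)
    ext n
    have h0 : (u n : ℂ) = 0 := congr_fun this n
    exact_mod_cast h0
  · rintro u ⟨G, hG⟩
    obtain ⟨H, hH⟩ := exists_hecke hQ hNQ hQN k G
    refine ⟨H, fun τ ↦ ?_⟩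
    rw [hH]
    convert! hasSum_hecke hQ hk G _ hG τ using 1
    ext n
    congr 1
    simp only [B4.hk]
    push_cast
    split_ifs <;> simp

end B4
end Part6

section Part7
open UpperHalfPlane ModularForm SlashInvariantForm Filter Asymptotics Function Complex
open scoped MatrixGroups Topology Real Manifold Pointwise

namespace B4

/-- `e^{2 π i / 8}` -/
noncomputable def z8 : ℂ := Complex.exp (2 * π * Complex.I / 8)

/-- The ModularForm.eta quotient on the complex numbers. -/
noncomputable def fC (z : ℂ) : ℂ := ModularForm.eta (4 * z) / ModularForm.eta z

lemma z8_ne : z8 ≠ 0 := Complex.exp_ne_zero _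

lemma z8_pow : z8 ^ 8 = 1 := by
  rw [z8, ← Complex.exp_nat_mul, Complex.exp_eq_one_iff]
  exact ⟨1, by push_cast; ring⟩

lemma z8_zpow_congr {a b : ℤ} (h : a % 8 = b % 8) : z8 ^ a = z8 ^ b := by
  have : a = b + 8 * ((a - b) / 8) := by omega
  rw [this, zpow_add₀ z8_ne, zpow_mul]
  have h8 : z8 ^ (8 : ℤ) = 1 := by exact_mod_cast z8_pow
  rw [h8, one_zpow, mul_one]

lemma eta_add_int (z : ℂ) (n : ℤ) : ModularForm.eta (z + n) = Complex.exp (2 * π * Complex.I * n / 24) * ModularForm.eta z := by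
  have h1 : ∀ i, eta_q i (z + n) = eta_q i z := by
    intro i
    rw [eta_q_eq_pow, eta_q_eq_pow]
    congr 1
    rw [Complex.exp_eq_exp_iff_exists_int]
    exact ⟨n, by ring⟩
  simp only [ModularForm.eta, h1, ← mul_assoc]
  congr 1
  simp only [Periodic.qParam, ← Complex.exp_add]
  congr 1
  push_cast; ring

lemma fC_add_int (z : ℂ) (n : ℤ) : fC (z + n) = z8 ^ n * fC z := by
  have e : 4 * (z + n) = 4 * z + ((4 * n : ℤ) : ℂ) := by push_cast; ring
  rw [fC, e, eta_add_int, eta_add_int, fC, z8, ← Complex.exp_int_mul, mul_div_mul_comm,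
    ← Complex.exp_sub]
  congr 2
  push_cast; ring

lemma eta_inv {z : ℂ} (hz : 0 < z.im) : ModularForm.eta (-1 / z) = (sqrt Complex.I)⁻¹ * (sqrt z * ModularForm.eta z) := by
  simpa using eta_comp_eq_csqrt_I_inv hz

lemma sqrt_four {z : ℂ} (hz : z ≠ 0) : sqrt (4 * z) = 2 * sqrt z := by
  rw [sqrt_eq_exp hz, sqrt_eq_exp (by simpa using hz)]
  have h := Complex.log_ofReal_mul (r := 4) (by norm_num) hz
  have h4 : Real.log 4 = 2 * Real.log 2 := by
    rw [show (4 : ℝ) = 2 ^ 2 by norm_num, Real.log_pow]; norm_num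
  rw [h4] at h
  push_cast at h
  rw [h, add_div, Complex.exp_add]
  congr 1
  rw [mul_div_cancel_left₀ _ two_ne_zero, ← Complex.ofReal_exp, Real.exp_log (by norm_num)]
  norm_num

lemma sqrt_ne {z : ℂ} (hz : z ≠ 0) : sqrt z ≠ 0 := by
  rw [sqrt_eq_exp hz]; exact Complex.exp_ne_zero _

lemma inv_im_pos {z : ℂ} (hz : 0 < z.im) : 0 < (-1 / z).im := by
  have h := (UpperHalfPlane.mk z hz).im_inv_neg_coe_pos
  have e : -1 / z = (-z)⁻¹ := by rw [inv_neg]; ring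
  rw [e]; exact h

lemma ne_zero_of_im {z : ℂ} (hz : 0 < z.im) : z ≠ 0 := by
  rintro rfl; simp at hz

lemma fC_L {z : ℂ} (hz : 0 < z.im) : fC (z / (4 * z + 1)) = z8 * fC z := by
  have hz0 := ne_zero_of_im hz
  have hzi : 0 < (4 * z).im := by simpa using hz
  have hd : 4 * z + 1 ≠ 0 := by
    intro h
    have := congr_arg Complex.im h
    simp at this; linarith
  set w := -1 / z + ((-4 : ℤ) : ℂ) with hw
  set v := -1 / (4 * z) + ((-1 : ℤ) : ℂ) with hv
  have hwv : w = 4 * v := by rw [hw, hv]; push_cast; field_simp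
  have hwi : 0 < w.im := by
    have := inv_im_pos hz
    rw [hw]; simpa using this
  have hvi : 0 < v.im := by
    have := inv_im_pos hzi
    rw [hv]; simpa using this
  have hv0 := ne_zero_of_im hvi
  have e1 : z / (4 * z + 1) = -1 / w := by
    rw [hw]; push_cast
    have : -1 / z + -4 = - (4 * z + 1) / z := by field_simp; ring
    rw [this, div_div_eq_mul_div, neg_one_mul, neg_div_neg_eq]
  have e2 : 4 * (z / (4 * z + 1)) = -1 / v := by
    rw [e1, hwv]; field_simp
  have hsI := sqrt_ne Complex.I_ne_zero
  have hsv := sqrt_ne hv0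
  have hsz := sqrt_ne hz0
  have hez := eta_ne_zero hz
  rw [fC, e2, e1, eta_inv hwi, eta_inv hvi, hwv, sqrt_four hv0, ← hwv, hw, hv, eta_add_int,
    eta_add_int, eta_inv hz, eta_inv hzi, sqrt_four hz0, fC, ← hv]
  have e3 : Complex.exp (2 * π * Complex.I * ((-1 : ℤ) : ℂ) / 24)
      = z8 * Complex.exp (2 * π * Complex.I * ((-4 : ℤ) : ℂ) / 24) := by
    rw [z8, ← Complex.exp_add]; congr 1; push_cast; ring
  rw [e3]
  have := Complex.exp_ne_zero (2 * π * Complex.I * ((-4 : ℤ) : ℂ) / 24)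
  field_simp

end B4
end Part7

section Part8
open UpperHalfPlane ModularForm SlashInvariantForm Filter Asymptotics Function Complex
open scoped MatrixGroups Topology Real Manifold Pointwise

namespace B4

lemma den_ne {z : ℂ} (hz : 0 < z.im) {c d : ℤ} (h : c ≠ 0 ∨ d ≠ 0) : (c : ℂ) * z + d ≠ 0 := by
  intro h0
  have h1 := congr_arg Complex.im h0
  simp at h1
  rcases h1 with h1 | h1
  · subst h1
    simp at h0 h
    exact h h0
  · exact hz.ne' h1

lemma mob_im_pos {z : ℂ} (hz : 0 < z.im) (s : ℂ) (hs : s.im = 0) (hs0 : 1 + s * z ≠ 0) :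
    0 < (z / (1 + s * z)).im := by
  have : (z / (1 + s * z)).im = z.im / Complex.normSq (1 + s * z) := by
    rw [Complex.div_im]
    simp [hs]
    ring
  rw [this]
  exact div_pos hz (Complex.normSq_pos.mpr hs0)

lemma fC_mob_aux (n : ℕ) : ∀ a b c d : ℤ, a * d - 4 * b * c = 1 →
    (4 * c).natAbs + d.natAbs ≤ n → ∀ z : ℂ, 0 < z.im →
    fC ((a * z + b) / (4 * c * z + d)) = z8 ^ (d * (b + c)) * fC z := by
  induction n with
  | zero =>
    intro a b c d hdet hn
    have h1 : c = 0 := by omega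
    have h2 : d = 0 := by omega
    subst h1 h2; simp at hdet
  | succ n ih =>
    intro a b c d hdet hn z hz
    have hcd : (4 * c) ≠ 0 ∨ d ≠ 0 := by
      by_contra! h
      obtain ⟨h1, h2⟩ := h
      have h1 : c = 0 := by omega
      subst h1 h2; simp at hdet
    have hden := den_ne hz hcd
    push_cast at hden
    have ha_odd : a % 2 = 1 := by
      rcases Int.emod_two_eq_zero_or_one a with h | h
      · exfalso
        obtain ⟨t, rfl⟩ : (2 : ℤ) ∣ a := Int.dvd_of_emod_eq_zero h
        have : 2 * (t * d - 2 * (b * c)) = 1 := by linarith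
        omega
      · exact h
    have hd_odd : d % 2 = 1 := by
      rcases Int.emod_two_eq_zero_or_one d with h | h
      · exfalso
        obtain ⟨t, rfl⟩ : (2 : ℤ) ∣ d := Int.dvd_of_emod_eq_zero h
        have : 2 * (a * t - 2 * (b * c)) = 1 := by linarith
        omega
      · exact h
    obtain ⟨a', rfl⟩ : ∃ t, a = 2 * t + 1 := ⟨a / 2, by omega⟩
    obtain ⟨d', rfl⟩ : ∃ t, d = 2 * t + 1 := ⟨d / 2, by omega⟩
    have hev : ∃ t, c * (c + 1) = 2 * t := by
      obtain ⟨t, ht⟩ := Int.even_mul_succ_self c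
      exact ⟨t, by omega⟩
    have hev2 : ∃ t, d' * (d' + 1) = 2 * t := by
      obtain ⟨t, ht⟩ := Int.even_mul_succ_self d'
      exact ⟨t, by omega⟩
    obtain ⟨t, ht⟩ := hev
    obtain ⟨t2, ht2⟩ := hev2
    have hT : ∀ e : ℤ, e = 1 ∨ e = -1 →
        (4 * c).natAbs + (2 * d' + 1 + e * (4 * c)).natAbs ≤ n →
        fC (((2 * a' + 1 : ℤ) * z + b) / (4 * c * z + (2 * d' + 1 : ℤ)))
          = z8 ^ ((2 * d' + 1) * (b + c)) * fC z := by
      intro e he hn'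
      have he2 : e * e = 1 := by rcases he with rfl | rfl <;> norm_num
      have h1 := ih (2 * a' + 1) (b + e * (2 * a' + 1)) c (2 * d' + 1 + e * (4 * c))
        (by linear_combination hdet) hn' (z + ((-e : ℤ) : ℂ)) (by simpa using hz)
      rw [fC_add_int, ← mul_assoc (z8 ^ _), ← zpow_add₀ z8_ne] at h1
      convert! h1 using 2
      · push_cast; congr 1 <;> ring
      · apply z8_zpow_congr
        apply Int.emod_eq_emod_iff_emod_sub_eq_zero.mpr
        apply Int.emod_eq_zero_of_dvd
        rcases he with rfl | rfl
        · refine ⟨- (b * c + c * a' + t), ?_⟩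
          linear_combination (-1) * hdet - 4 * ht
        · refine ⟨- (- b * c + c * a' + t - c ^ 2), ?_⟩
          linear_combination hdet - 4 * ht
    have hL : ∀ e : ℤ, e = 1 ∨ e = -1 →
        (4 * (c + e * (2 * d' + 1))).natAbs + (2 * d' + 1).natAbs ≤ n →
        fC (((2 * a' + 1 : ℤ) * z + b) / (4 * c * z + (2 * d' + 1 : ℤ)))
          = z8 ^ ((2 * d' + 1) * (b + c)) * fC z := by
      intro e he hn'
      have hu0 : (1 : ℂ) + (-4 * e : ℤ) * z ≠ 0 := by
        have := den_ne hz (c := -4 * e) (d := 1) (Or.inr one_ne_zero)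
        rw [add_comm]; exact_mod_cast this
      have hu := mob_im_pos hz ((-4 * e : ℤ) : ℂ) (by simp) hu0
      have h1 := ih (2 * a' + 1 + 4 * e * b) b (c + e * (2 * d' + 1)) (2 * d' + 1)
        (by linear_combination hdet) hn' _ hu
      have hfu : fC (z / (1 + ((-4 * e : ℤ) : ℂ) * z)) = z8 ^ (-e) * fC z := by
        rcases he with rfl | rfl
        · have h2 := fC_L hu
          have h3 : z / (1 + ((-4 * 1 : ℤ) : ℂ) * z) / (4 * (z / (1 + ((-4 * 1 : ℤ) : ℂ) * z)) + 1) = z := by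
            push_cast at hu0 ⊢
            have : 4 * (z / (1 + -4 * z)) + 1 = 1 / (1 + -4 * z) := by
              rw [eq_div_iff hu0, add_mul, mul_assoc, div_mul_cancel₀ _ hu0]; ring
            rw [this, div_div_div_cancel_right₀ hu0, div_one]
          rw [h3] at h2
          rw [h2, zpow_neg_one, inv_mul_cancel_left₀ z8_ne]
        · have h2 := fC_L hz
          push_cast
          simp only [neg_neg, zpow_one, mul_neg, mul_one]
          rw [← h2, add_comm]
      rw [hfu, ← mul_assoc (z8 ^ _), ← zpow_add₀ z8_ne] at h1
      convert! h1 using 2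
      · push_cast at hu0 hden ⊢
        have e1 : (2 * a' + 1 + 4 * e * b : ℂ) * (z / (1 + -4 * e * z)) + b
          = ((2 * a' + 1) * z + b) / (1 + -4 * e * z) := by rw [eq_div_iff hu0, add_mul, mul_assoc, div_mul_cancel₀ _ hu0]; ring
        have e2 : 4 * (c + e * (2 * d' + 1) : ℂ) * (z / (1 + -4 * e * z)) + (2 * d' + 1)
          = (4 * c * z + (2 * d' + 1)) / (1 + -4 * e * z) := by rw [eq_div_iff hu0, add_mul, mul_assoc, div_mul_cancel₀ _ hu0]; ring
        rw [e1, e2, div_div_div_cancel_right₀ hu0]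
      · apply z8_zpow_congr
        apply Int.emod_eq_emod_iff_emod_sub_eq_zero.mpr
        apply Int.emod_eq_zero_of_dvd
        refine ⟨- e * t2, ?_⟩
        linear_combination (-4 * e) * ht2
    by_cases hc : c = 0
    · subst hc
      have hd1 : (2 * a' + 1) * (2 * d' + 1) = 1 := by linarith
      have h3 : (2 * d' + 1) = 1 ∨ (2 * d' + 1) = -1 := by
        rw [mul_comm] at hd1
        exact Int.isUnit_iff.mp (IsUnit.of_mul_eq_one _ hd1)
      have h4 : (2 * a' + 1) = (2 * d' + 1) := by
        rcases h3 with h3 | h3 <;> rw [h3] at hd1 ⊢ <;> omega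
      rw [h4]
      have h5 : (((2 * d' + 1 : ℤ) : ℂ) * z + b) / (4 * ((0 : ℤ) : ℂ) * z + ((2 * d' + 1 : ℤ) : ℂ))
         = z + (((2 * d' + 1) * (b + 0) : ℤ) : ℂ) := by
        rcases h3 with h3 | h3 <;> rw [h3] <;> push_cast <;> ring
      rw [h5, fC_add_int]
    · by_cases hlt : (4 * c).natAbs < 2 * (2 * d' + 1).natAbs
      · by_cases hs : 0 < c * (2 * d' + 1)
        · apply hT (-1) (Or.inr rfl)
          rcases lt_or_gt_of_ne hc with h | h
          · have := neg_of_mul_pos_right hs h.le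
            omega
          · have := pos_of_mul_pos_right hs h.le
            omega
        · push Not at hs
          apply hT 1 (Or.inl rfl)
          rcases lt_or_gt_of_ne hc with h | h
          · have : 0 ≤ 2 * d' + 1 := by nlinarith
            omega
          · have : 2 * d' + 1 ≤ 0 := by nlinarith
            omega
      · by_cases hs : 0 < c * (2 * d' + 1)
        · apply hL (-1) (Or.inr rfl)
          rcases lt_or_gt_of_ne hc with h | h
          · have := neg_of_mul_pos_right hs h.le
            omega
          · have := pos_of_mul_pos_right hs h.le
            omega
        · push Not at hs
          apply hL 1 (Or.inl rfl)
          rcases lt_or_gt_of_ne hc with h | h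
          · have : 0 ≤ 2 * d' + 1 := by nlinarith
            omega
          · have : 2 * d' + 1 ≤ 0 := by nlinarith
            omega

/-- Invariance of the eta quotient. -/
lemma fC_mob {a b c d : ℤ} (hdet : a * d - b * c = 1) (h4 : (4 : ℤ) ∣ c)
    (h8 : (8 : ℤ) ∣ b + c / 4) {z : ℂ} (hz : 0 < z.im) :
    fC ((a * z + b) / (c * z + d)) = fC z := by
  obtain ⟨c, rfl⟩ := h4
  have h := fC_mob_aux _ a b c d (by linarith) le_rfl z hz
  push_cast at h ⊢
  rw [h]
  have : z8 ^ (d * (b + c)) = z8 ^ (0 : ℤ) := by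
    apply z8_zpow_congr
    have h8' : (8 : ℤ) ∣ d * (b + c) := by
      apply Dvd.dvd.mul_left
      simpa using h8
    omega
  rw [this, zpow_zero, one_mul]

end B4
end Part8

section Part9
open UpperHalfPlane ModularForm SlashInvariantForm Filter Asymptotics Function Complex
open scoped MatrixGroups Topology Real Manifold Pointwise

namespace B4

/-- Moebius transformation with integer entries. -/
noncomputable def mob (a b c d : ℤ) (z : ℂ) : ℂ := (a * z + b) / (c * z + d)

lemma cd_ne {a b c d : ℤ} (h : 0 < a * d - b * c) : c ≠ 0 ∨ d ≠ 0 := by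
  by_contra! h0
  obtain ⟨rfl, rfl⟩ := h0
  simp at h

lemma mob_im {a b c d : ℤ} (h : 0 < a * d - b * c) {z : ℂ} (hz : 0 < z.im) :
    0 < (mob a b c d z).im := by
  have hd := den_ne hz (cd_ne h)
  have : (mob a b c d z).im = (a * d - b * c : ℤ) * z.im / Complex.normSq (c * z + d) := by
    rw [mob, Complex.div_im]
    simp
    ring
  rw [this]
  have h' : (0 : ℝ) < (a * d - b * c : ℤ) := by exact_mod_cast h
  exact div_pos (mul_pos h' hz) (Complex.normSq_pos.mpr hd)

lemma mob_mob {a b c d a' b' c' d' : ℤ} (h : 0 < a * d - b * c)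
    {z : ℂ} (hz : 0 < z.im) :
    mob a' b' c' d' (mob a b c d z) =
      mob (a' * a + b' * c) (a' * b + b' * d) (c' * a + d' * c) (c' * b + d' * d) z := by
  have hd := den_ne hz (cd_ne h)
  simp only [mob]
  have e1 : (a' : ℂ) * ((a * z + b) / (c * z + d)) + b' =
    (a' * (a * z + b) + b' * (c * z + d)) / (c * z + d) := by
      rw [eq_div_iff hd, add_mul, mul_assoc, div_mul_cancel₀ _ hd]
  have e2 : (c' : ℂ) * ((a * z + b) / (c * z + d)) + d' =
    (c' * (a * z + b) + d' * (c * z + d)) / (c * z + d) := by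
      rw [eq_div_iff hd, add_mul, mul_assoc, div_mul_cancel₀ _ hd]
  rw [e1, e2, div_div_div_cancel_right₀ hd]
  push_cast
  congr 1 <;> ring

/-- The discriminant as a function on the complex plane. -/
noncomputable def DC (z : ℂ) : ℂ := ModularForm.eta z ^ 24

lemma DC_ne {z : ℂ} (hz : 0 < z.im) : DC z ≠ 0 := pow_ne_zero _ (eta_ne_zero hz)

lemma DC_mob {a b c d : ℤ} (h : a * d - b * c = 1) {z : ℂ} (hz : 0 < z.im) :
    DC (mob a b c d z) = (c * z + d) ^ 12 * DC z := by
  obtain ⟨γ, ha, hb, hc, hd⟩ : ∃ γ : SL(2, ℤ), γ 0 0 = a ∧ γ 0 1 = b ∧ γ 1 0 = c ∧ γ 1 1 = d :=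
    ⟨⟨!![a, b; c, d], by rw [Matrix.det_fin_two_of, h]⟩, rfl, rfl, rfl, rfl⟩
  obtain ⟨τ, rfl⟩ : ∃ τ : ℍ, (τ : ℂ) = z := ⟨⟨z, hz⟩, rfl⟩
  have h0 : (discriminant ∣[(12 : ℤ)] γ) = discriminant :=
    CuspForm.discriminant.slash_action_eq' _ ⟨γ, rfl⟩
  have h1 := congr_fun h0 τ
  rw [ModularForm.SL_slash_apply] at h1
  have h2 : ((γ • τ : ℍ) : ℂ) = mob a b c d τ := by
    rw [UpperHalfPlane.coe_specialLinearGroup_apply, mob]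
    simp [ha, hb, hc, hd]
  have h3 : discriminant (γ • τ) = DC (mob a b c d τ) := by
    rw [discriminant, h2, DC]
  have h4 : discriminant τ = DC τ := by rw [discriminant, DC]
  have h5 : denom γ τ = c * τ + d := by
    rw [denom]
    simp [hc, hd]
  rw [h3, h4, h5] at h1
  have hd := den_ne hz (cd_ne (a := a) (b := b) (c := c) (d := d) (by omega))
  have hp : (c * τ + d : ℂ) ^ (-12 : ℤ) = ((c * τ + d : ℂ) ^ 12)⁻¹ := by
    rw [zpow_neg]; norm_cast
  rw [hp] at h1
  rw [← h1, mul_comm, mul_assoc, inv_mul_cancel₀ (pow_ne_zero _ hd), mul_one]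

lemma DC_theta : (fun τ : ℍ ↦ DC τ) =Θ[atImInfty] fun τ : ℍ ↦ Real.exp (-2 * π * τ.im) := by
  refine ⟨?_, exp_isBigO_discriminant⟩
  have := CuspFormClass.exp_decay_atImInfty (h := 1) CuspForm.discriminant one_pos one_mem_strictPeriods_SL
  simp only [div_one] at this
  exact this

lemma DC_theta_tri {A B D : ℤ} (hA0 : 0 < A) (hD0 : 0 < D) :
    (fun τ : ℍ ↦ DC (mob A B 0 D τ)) =Θ[atImInfty]
      fun τ : ℍ ↦ Real.exp (-2 * π * τ.im * ((A : ℝ) / D)) := by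
  obtain ⟨α, h00, h01, h10, h11⟩ : ∃ α : Matrix (Fin 2) (Fin 2) ℤ,
    α 0 0 = A ∧ α 0 1 = B ∧ α 1 0 = 0 ∧ α 1 1 = D := ⟨!![A, B; 0, D], rfl, rfl, rfl, rfl⟩
  have hα : α.det = A * D := by rw [Matrix.det_fin_two, h00, h11, h10]; ring
  have hα0 : 0 < α.det := by rw [hα]; positivity
  have ht := tendsto_smul_atImInfty (g := gl α hα0.ne') (by rw [gl_apply, h10]; simp)
  have h4 : ∀ τ : ℍ, ((gl α hα0.ne' • τ : ℍ) : ℂ) = mob A B 0 D τ := by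
    intro τ
    rw [coe_gl_smul _ _ hα0, h00, h01, h10, h11, mob]
  have e1 : (fun τ : ℍ ↦ DC (mob A B 0 D τ)) = (fun τ : ℍ ↦ DC τ) ∘ fun τ ↦ gl α hα0.ne' • τ := by
    funext τ
    simp only [Function.comp, h4]
  have e2 : (fun τ : ℍ ↦ Real.exp (-2 * π * τ.im * ((A : ℝ) / D))) =
      (fun τ : ℍ ↦ Real.exp (-2 * π * τ.im)) ∘ fun τ ↦ gl α hα0.ne' • τ := by
    funext τ
    simp only [Function.comp]
    rw [← UpperHalfPlane.coe_im (gl α hα0.ne' • τ), h4, mob]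
    have : ((A : ℂ) * τ + B) / (((0 : ℤ) : ℂ) * τ + D) = (((A / D : ℝ) : ℂ) * τ + ((B / D : ℝ) : ℂ)) := by
      push_cast; ring
    rw [this, Complex.add_im, Complex.im_ofReal_mul, Complex.ofReal_im, add_zero, UpperHalfPlane.coe_im]
    congr 1
    ring
  rw [e1, e2]
  exact ⟨DC_theta.1.comp_tendsto ht, DC_theta.2.comp_tendsto ht⟩

lemma DC_mob_tri {a b c d : ℤ} (h : 0 < a * d - b * c) :
    ∃ A B D : ℤ, A = Int.gcd a c ∧ 0 < A ∧ 0 < D ∧ A * D = a * d - b * c ∧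
      ∀ τ : ℍ, DC (mob a b c d τ) * ((c * τ + d : ℂ) ^ 12)⁻¹ =
      ((D : ℂ) ^ 12)⁻¹ * DC (mob A B 0 D τ) := by
  have hg : 0 < Int.gcd a c := by
    rw [Int.gcd_pos_iff]
    by_contra! h0
    obtain ⟨rfl, rfl⟩ := h0
    simp at h
  set A : ℤ := ((Int.gcd a c : ℕ) : ℤ) with hA
  have hA0 : 0 < A := by rw [hA]; exact_mod_cast hg
  obtain ⟨a', ha'⟩ : A ∣ a := Int.gcd_dvd_left _ _
  obtain ⟨c', hc'⟩ : A ∣ c := Int.gcd_dvd_right _ _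
  obtain ⟨u, v, huv⟩ : ∃ u v, A = a * u + c * v := ⟨_, _, Int.gcd_eq_gcd_ab a c⟩
  have hb : a' * u + c' * v = 1 := by
    apply mul_left_cancel₀ hA0.ne'
    rw [mul_add, ← mul_assoc, ← mul_assoc, ← ha', ← hc', ← huv, mul_one]
  -- sigma = [a', -v; c', u]
  set D : ℤ := a' * d - c' * b with hD
  set B : ℤ := u * b + v * d with hB
  have hAD : A * D = a * d - b * c := by rw [hD, ha', hc']; ring
  have hD0 : 0 < D := by
    by_contra! hn
    have := mul_nonpos_of_nonneg_of_nonpos hA0.le hn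
    omega
  refine ⟨A, B, D, hA, hA0, hD0, hAD, fun τ ↦ ?_⟩
  · clear_value D B A
    have hτ : 0 < (τ : ℂ).im := τ.im_pos
    have hdet : 0 < A * D - B * 0 := by rw [mul_zero, sub_zero]; positivity
    have h1 := mob_mob (a' := a') (b' := -v) (c' := c') (d' := u) hdet hτ
    have h2 := DC_mob (a := a') (b := -v) (c := c') (d := u) (by linarith) (mob_im hdet hτ)
    rw [h1] at h2
    have e1 : a' * A + -v * 0 = a := by rw [ha']; ring
    have e2 : a' * B + -v * D = b := by rw [hB, hD]; linear_combination b * hb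
    have e3 : c' * A + u * 0 = c := by rw [hc']; ring
    have e4 : c' * B + u * D = d := by rw [hB, hD]; linear_combination d * hb
    rw [e1, e2, e3, e4] at h2
    have hDc : (D : ℂ) ≠ 0 := by exact_mod_cast hD0.ne'
    have e5 : (c' * mob A B 0 D τ + u : ℂ) = (c * τ + d) / D := by
      rw [mob]
      rw [← e3, ← e4, eq_div_iff hDc, add_mul, Int.cast_zero, zero_mul, zero_add, mul_assoc, div_mul_cancel₀ _ hDc]
      push_cast
      ring
    have hd := den_ne hτ (cd_ne h)
    rw [h2, e5]
    have hd12 := pow_ne_zero 12 hd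
    rw [div_pow]
    generalize DC (mob A B 0 D τ) = X
    generalize ((c : ℂ) * τ + d) ^ 12 = Y at hd12 ⊢
    generalize (D : ℂ) ^ 12 = Z
    rw [mul_right_comm, div_mul_eq_mul_div, mul_inv_cancel₀ hd12, one_div]

lemma DC_theta_mob {a b c d : ℤ} (h : 0 < a * d - b * c) :
    (fun τ : ℍ ↦ DC (mob a b c d τ) * ((c * τ + d : ℂ) ^ 12)⁻¹) =Θ[atImInfty]
      fun τ : ℍ ↦ Real.exp (-2 * π * τ.im * ((Int.gcd a c : ℝ) ^ 2 / ((a * d - b * c : ℤ) : ℝ))) := by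
  obtain ⟨A, B, D, hA, hA0, hD0, hAD, key⟩ := DC_mob_tri h
  have hDr : (D : ℝ) ≠ 0 := by exact_mod_cast hD0.ne'
  have hAr : (A : ℝ) ≠ 0 := by exact_mod_cast hA0.ne'
  have e : (Int.gcd a c : ℝ) ^ 2 / ((a * d - b * c : ℤ) : ℝ) = (A : ℝ) / D := by
    have : (Int.gcd a c : ℝ) = (A : ℝ) := by rw [hA]; norm_cast
    rw [this, ← hAD]
    push_cast
    field_simp
  rw [funext key, e]
  refine (isTheta_const_mul_left (inv_ne_zero (pow_ne_zero _ (by exact_mod_cast hD0.ne')))).mpr ?_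
  exact DC_theta_tri hA0 hD0

end B4
end Part9

section Part10
open UpperHalfPlane ModularForm SlashInvariantForm Filter Asymptotics Function Complex
open scoped MatrixGroups Topology Real Manifold Pointwise

namespace B4

lemma im_nonneg_eventually : ∀ᶠ τ : ℍ in atImInfty, 0 ≤ τ.im :=
  Filter.Eventually.of_forall fun τ ↦ τ.im_pos.le

lemma exp_isBigO_exp {r s : ℝ} (h : r ≤ s) :
    (fun τ : ℍ ↦ Real.exp (2 * π * τ.im * r)) =O[atImInfty] fun τ : ℍ ↦ Real.exp (2 * π * τ.im * s) := by
  apply IsBigO.of_bound 1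
  filter_upwards with τ
  rw [Real.norm_of_nonneg (Real.exp_pos _).le, Real.norm_of_nonneg (Real.exp_pos _).le, one_mul,
    Real.exp_le_exp]
  have := τ.im_pos
  gcongr

lemma fC_pow (z : ℂ) : fC z ^ 24 = DC (4 * z) / DC z := by
  rw [fC, div_pow, DC, DC]

lemma fC_growth {a b c d : ℤ} (h : 0 < a * d - b * c) {r : ℝ}
    (hr : (Int.gcd a c : ℝ) ^ 2 / ((a * d - b * c : ℤ) : ℝ) -
      (Int.gcd (4 * a) c : ℝ) ^ 2 / ((4 * a * d - 4 * b * c : ℤ) : ℝ) ≤ 24 * r) :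
    (fun τ : ℍ ↦ fC (mob a b c d τ)) =O[atImInfty] fun τ : ℍ ↦ Real.exp (2 * π * τ.im * r) := by
  have h4 : 0 < 4 * a * d - 4 * b * c := by linarith
  have h1 := (DC_theta_mob h4).div (DC_theta_mob h)
  apply IsBigO.of_pow (n := 24) (by norm_num)
  have e1 : (fun τ : ℍ ↦ fC (mob a b c d τ)) ^ 24 = fun τ : ℍ ↦
      DC (mob (4 * a) (4 * b) c d τ) * ((c * τ + d : ℂ) ^ 12)⁻¹ /
        (DC (mob a b c d τ) * ((c * τ + d : ℂ) ^ 12)⁻¹) := by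
    funext τ
    have hd := den_ne τ.im_pos (cd_ne h)
    rw [Pi.pow_apply, fC_pow, mul_div_mul_right _ _ (inv_ne_zero (pow_ne_zero _ hd))]
    congr 2
    simp only [mob]
    push_cast
    ring
  have e2 : (fun τ : ℍ ↦ Real.exp (2 * π * τ.im * r)) ^ 24 =
      fun τ : ℍ ↦ Real.exp (2 * π * τ.im * (24 * r)) := by
    funext τ
    rw [Pi.pow_apply, ← Real.exp_nat_mul]
    congr 1; push_cast; ring
  rw [e1, e2]
  refine h1.1.trans (IsBigO.trans ?_ (exp_isBigO_exp hr))
  apply IsBigO.of_bound 1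
  filter_upwards with τ
  rw [one_mul, ← Real.exp_sub]
  apply le_of_eq
  congr 2
  ring

lemma fC_congr {a b c d a' b' c' d' : ℤ} (h : a * d - b * c = 1) (h' : a' * d' - b' * c' = 1)
    (ha : (32 : ℤ) ∣ a' - a) (hb : (32 : ℤ) ∣ b' - b) (hc : (32 : ℤ) ∣ c' - c) (hd : (32 : ℤ) ∣ d' - d)
    {z : ℂ} (hz : 0 < z.im) : fC (mob a' b' c' d' z) = fC (mob a b c d z) := by
  have hpos : 0 < a * d - b * c := by omega
  obtain ⟨x, hx⟩ := ha
  obtain ⟨y, hy⟩ := hb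
  obtain ⟨u, hu⟩ := hc
  obtain ⟨v, hv⟩ := hd
  obtain rfl : a' = a + 32 * x := by linarith
  obtain rfl : b' = b + 32 * y := by linarith
  obtain rfl : c' = c + 32 * u := by linarith
  obtain rfl : d' = d + 32 * v := by linarith
  have hb0 : -(a + 32 * x) * b + (b + 32 * y) * a = 32 * (y * a - x * b) := by ring
  have hc0 : (c + 32 * u) * d - (d + 32 * v) * c = 32 * (u * d - v * c) := by ring
  have h1 := fC_mob (a := (a + 32 * x) * d - (b + 32 * y) * c) (b := -(a + 32 * x) * b + (b + 32 * y) * a)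
    (c := (c + 32 * u) * d - (d + 32 * v) * c) (d := -(c + 32 * u) * b + (d + 32 * v) * a)
    (by linear_combination (a * d - b * c) * h' + h) (by rw [hc0]; omega) (by rw [hb0, hc0]; omega) (mob_im hpos hz)
  have h2 := mob_mob (a' := (a + 32 * x) * d - (b + 32 * y) * c) (b' := -(a + 32 * x) * b + (b + 32 * y) * a)
    (c' := (c + 32 * u) * d - (d + 32 * v) * c) (d' := -(c + 32 * u) * b + (d + 32 * v) * a) hpos hz
  rw [← h1]
  change _ = fC (mob _ _ _ _ (mob a b c d z))
  rw [h2]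
  congr 2
  · linear_combination (-(a + 32 * x)) * h
  · linear_combination (-(b + 32 * y)) * h
  · linear_combination (-(c + 32 * u)) * h
  · linear_combination (-(d + 32 * v)) * h

/-- shift matrix composed with gamma -/
lemma fC_shift {m : ℕ} (hm : 0 < m) {a b c d : ℤ} (h : a * d - b * c = 1) (hc : (m : ℤ) ^ 2 ∣ c) (j j' : ℤ)
    (hj : (m : ℤ) ∣ j * d - j' * a) {z : ℂ} (hz : 0 < z.im) :
    fC (mob a b c d z + 32 * j / m) = fC (mob a b c d (z + 32 * j' / m)) := by
  obtain ⟨c, rfl⟩ := hc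
  obtain ⟨t, ht⟩ := hj
  have hm0 : (m : ℂ) ≠ 0 := by exact_mod_cast hm.ne'
  have hw : 0 < (z + 32 * j' / m : ℂ).im := by
    have : (32 * j' / m : ℂ) = ((32 * j' / m : ℝ) : ℂ) := by push_cast; ring
    rw [this, Complex.add_im, Complex.ofReal_im, add_zero]; exact hz
  have h1 : (a + 32 * j * (m * c)) * (d - 32 * j' * (m * c)) -
      (b + 32 * t - 32 * 32 * j * j' * c) * (m ^ 2 * c) = 1 := by
    linear_combination h + (32 * m * c) * ht
  have h2 := fC_congr h h1 (by ring_nf; omega) (by ring_nf; omega) (by simp) (by ring_nf; omega) hw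
  rw [← h2]
  congr 1
  have hd1 := den_ne hz (cd_ne (a := a) (b := b) (c := m ^ 2 * c) (d := d) (by omega))
  rw [mob, mob]
  have e2 : (((m ^ 2 * c : ℤ) : ℂ)) * (z + 32 * j' / m) + ((d - 32 * j' * (m * c) : ℤ) : ℂ) =
    ((m ^ 2 * c : ℤ) : ℂ) * z + d := by
    push_cast
    field_simp
    ring
  have ht' : (j * d - j' * a : ℂ) = m * t := by exact_mod_cast ht
  rw [e2, eq_div_iff hd1, add_mul, div_mul_cancel₀ _ hd1]
  push_cast
  field_simp
  linear_combination 32 * ht'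

end B4
end Part10

section Part11
open UpperHalfPlane ModularForm SlashInvariantForm Filter Asymptotics Function Complex
open scoped MatrixGroups Topology Real Manifold Pointwise

namespace B4

/-- The average of the translates of the eta quotient. -/
noncomputable def f0 (m : ℕ) [NeZero m] (z : ℂ) : ℂ :=
  (1 / m : ℂ) * ∑ j : ZMod m, fC (z + 32 * ((j.val : ℤ) : ℂ) / m)

lemma im_shift {m : ℕ} {z : ℂ} (hz : 0 < z.im) (j : ℤ) : 0 < (z + 32 * j / m : ℂ).im := by
  have : (32 * j / m : ℂ) = ((32 * j / m : ℝ) : ℂ) := by push_cast; ring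
  rw [this, Complex.add_im, Complex.ofReal_im, add_zero]; exact hz

lemma f0_mob {m : ℕ} [NeZero m] {a b c d : ℤ} (h : a * d - b * c = 1) (hc : (m : ℤ) ^ 2 ∣ c)
    {z : ℂ} (hz : 0 < z.im) :
    f0 m (mob a b c d z) =
      (1 / m : ℂ) * ∑ j : ZMod m, fC (mob a b c d (z + 32 * ((j.val : ℤ) : ℂ) / m)) := by
  have hm : 0 < m := Nat.pos_of_ne_zero (NeZero.ne m)
  have hcm : ((c : ℤ) : ZMod m) = 0 := by
    rw [ZMod.intCast_zmod_eq_zero_iff_dvd]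
    exact (Dvd.intro_left _ (by ring : (m : ℤ) * m = (m : ℤ) ^ 2)).trans hc
  have had : ((a : ℤ) : ZMod m) * (d : ℤ) = 1 := by
    have := congr_arg (fun x : ℤ ↦ (x : ZMod m)) h
    push_cast at this
    rwa [hcm, mul_zero, sub_zero] at this
  have hu : ((d : ZMod m) * d) * ((a : ZMod m) * a) = 1 := by
    linear_combination ((a : ZMod m) * d + 1) * had
  let u : (ZMod m)ˣ := ⟨(d : ZMod m) * d, (a : ZMod m) * a, hu, by rw [mul_comm, hu]⟩
  have key : ∀ j : ZMod m, fC (mob a b c d z + 32 * ((j.val : ℤ) : ℂ) / m) =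
      fC (mob a b c d (z + 32 * ((((Units.mulRight u) j).val : ℤ) : ℂ) / m)) := by
    intro j
    apply fC_shift hm h hc _ _ _ hz
    rw [← ZMod.intCast_zmod_eq_zero_iff_dvd]
    push_cast
    rw [ZMod.natCast_zmod_val, ZMod.natCast_zmod_val]
    simp only [Units.mulRight_apply, u]
    linear_combination (- j * (d : ZMod m)) * had
  rw [f0, Finset.sum_congr rfl fun j _ ↦ key j]
  rw [Equiv.sum_comp (Units.mulRight u) fun j : ZMod m ↦ fC (mob a b c d (z + 32 * ((j.val : ℤ) : ℂ) / m))]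

/-- The modular form as a function on the complex numbers. -/
noncomputable def KC (m : ℕ) [NeZero m] (z : ℂ) : ℂ :=
  f0 m z * (DC z ^ (m ^ 2) / DC ((m ^ 2 : ℕ) * z))

lemma KC_mob {m : ℕ} [NeZero m] {a b c d : ℤ} (h : a * d - b * c = 1)
    {z : ℂ} (hz : 0 < z.im) :
    KC m (mob a b c d z) * ((c * z + d : ℂ) ^ (12 * (m ^ 2 - 1)))⁻¹ =
      f0 m (mob a b c d z) * (DC z ^ (m ^ 2) /
        (DC (mob ((m ^ 2 : ℕ) * a) ((m ^ 2 : ℕ) * b) c d z) * ((c * z + d : ℂ) ^ 12)⁻¹)) := by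
  have hd := den_ne hz (cd_ne (a := a) (b := b) (c := c) (d := d) (by omega))
  have hm : 1 ≤ m ^ 2 := Nat.one_le_pow _ _ (Nat.pos_of_ne_zero (NeZero.ne m))
  have e1 : ((m ^ 2 : ℕ) : ℂ) * mob a b c d z = mob ((m ^ 2 : ℕ) * a) ((m ^ 2 : ℕ) * b) c d z := by
    simp only [mob]
    push_cast
    ring
  rw [KC, e1, mul_assoc]
  congr 1
  rw [DC_mob h hz, mul_pow]
  generalize DC (mob ((m ^ 2 : ℕ) * a) ((m ^ 2 : ℕ) * b) c d z) = Y
  generalize DC z ^ (m ^ 2) = X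
  generalize (c * z + d : ℂ) = w at hd ⊢
  have e2 : (w ^ 12) ^ m ^ 2 = w ^ (12 * (m ^ 2 - 1)) * w ^ 12 := by
    rw [← pow_mul, ← pow_add]
    congr 1; omega
  rw [e2]
  have h1 := pow_ne_zero (12 * (m ^ 2 - 1)) hd
  have h2 := pow_ne_zero 12 hd
  generalize w ^ (12 * (m ^ 2 - 1)) = U at h1 ⊢
  generalize w ^ 12 = V at h2 ⊢
  rw [div_mul_eq_div_div, div_inv_eq_mul]
  field_simp

lemma mob_one (z : ℂ) : mob 1 0 0 1 z = z := by simp [mob]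

lemma KC_inv {m : ℕ} [NeZero m] {a b c d : ℤ} (h : a * d - b * c = 1)
    (ha : ((32 * m ^ 2 : ℕ) : ℤ) ∣ a - 1) (hb : ((32 * m ^ 2 : ℕ) : ℤ) ∣ b)
    (hc : ((32 * m ^ 2 : ℕ) : ℤ) ∣ c) (hd : ((32 * m ^ 2 : ℕ) : ℤ) ∣ d - 1)
    {z : ℂ} (hz : 0 < z.im) :
    KC m (mob a b c d z) * ((c * z + d : ℂ) ^ (12 * (m ^ 2 - 1)))⁻¹ = KC m z := by
  have hm : 0 < m := Nat.pos_of_ne_zero (NeZero.ne m)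
  have h32 : (32 : ℤ) ∣ ((32 * m ^ 2 : ℕ) : ℤ) := by push_cast; exact Dvd.intro _ rfl
  have hm2 : (m : ℤ) ^ 2 ∣ ((32 * m ^ 2 : ℕ) : ℤ) := by push_cast; exact Dvd.intro_left _ rfl
  have hden := den_ne hz (cd_ne (a := a) (b := b) (c := c) (d := d) (by omega))
  have hA : f0 m (mob a b c d z) = f0 m z := by
    rw [f0_mob h (hm2.trans hc) hz, f0]
    refine congr_arg _ ?_
    refine Finset.sum_congr rfl fun j _ ↦ ?_
    rw [fC_congr (a := 1) (b := 0) (c := 0) (d := 1) (by norm_num) h (h32.trans ha)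
      (by simpa using h32.trans hb) (by simpa using h32.trans hc) (h32.trans hd) (im_shift hz _), mob_one]
  have hB : DC (mob ((m ^ 2 : ℕ) * a) ((m ^ 2 : ℕ) * b) c d z) * ((c * z + d : ℂ) ^ 12)⁻¹ =
      DC ((m ^ 2 : ℕ) * z) := by
    obtain ⟨c', rfl⟩ := hm2.trans hc
    have hMz : 0 < ((m ^ 2 : ℕ) * z : ℂ).im := by
      have : ((m ^ 2 : ℕ) * z : ℂ) = ((m ^ 2 : ℝ) : ℂ) * z := by push_cast; ring
      rw [this, Complex.im_ofReal_mul]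
      positivity
    have h1 := DC_mob (a := a) (b := m ^ 2 * b) (c := c') (d := d) (by linarith) hMz
    have e1 : mob a (m ^ 2 * b) c' d ((m ^ 2 : ℕ) * z) =
      mob ((m ^ 2 : ℕ) * a) ((m ^ 2 : ℕ) * b) (m ^ 2 * c') d z := by
      simp only [mob]
      push_cast
      congr 1 <;> ring
    have e2 : (c' * ((m ^ 2 : ℕ) * z) + d : ℂ) = ((m ^ 2 * c' : ℤ) : ℂ) * z + d := by
      push_cast; ring
    rw [← e1, h1, e2, mul_right_comm, mul_inv_cancel₀ (pow_ne_zero _ hden), one_mul]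
  rw [KC_mob h hz, KC, hA, hB]

end B4
end Part11

section Part12
open UpperHalfPlane ModularForm SlashInvariantForm Filter Asymptotics Function Complex
open scoped MatrixGroups Topology Real Manifold Pointwise

namespace B4

lemma sum_zmod_range {m : ℕ} [NeZero m] (F : ℕ → ℂ) :
    ∑ j : ZMod m, F j.val = ∑ j ∈ Finset.range m, F j := by
  cases m with
  | zero => exact absurd rfl (NeZero.ne 0)
  | succ n => exact Fin.sum_univ_eq_sum_range F (n + 1)

lemma mdiff_of_diff {F : ℂ → ℂ} (hF : ∀ z : ℂ, 0 < z.im → DifferentiableAt ℂ F z) :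
    MDiff (fun τ : ℍ ↦ F τ) := by
  rw [UpperHalfPlane.mdifferentiable_iff]
  intro z hz
  have h1 : (fun τ : ℍ ↦ F τ) ∘ ofComplex =ᶠ[𝓝 z] F := by
    filter_upwards [isOpen_upperHalfPlaneSet.mem_nhds hz] with w hw
    simp [ofComplex_apply_of_im_pos hw]
  exact (h1.differentiableAt_iff.mpr (hF z hz)).differentiableWithinAt

lemma avg_bdd {m : ℕ} [NeZero m] (hm : 2 ≤ m) {F : ℂ → ℂ}
    (hF : ∀ z : ℂ, 0 < z.im → DifferentiableAt ℂ F z)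
    (hper : ∀ z : ℂ, 0 < z.im → F (z + 32) = F z)
    (hbd : (fun τ : ℍ ↦ F τ) =O[atImInfty] fun τ : ℍ ↦ Real.exp (2 * π * τ.im * (1 / 32))) :
    (fun τ : ℍ ↦ ∑ j : ZMod m, F (τ + 32 * ((j.val : ℤ) : ℂ) / m)) =O[atImInfty] fun _ ↦ (1 : ℝ) := by
  let g : ℍ → ℂ := fun τ ↦ Periodic.qParam 32 τ * F τ
  have hnorm : ∀ τ : ℍ, ‖Periodic.qParam 32 τ‖ = Real.exp (- (2 * π * τ.im * (1 / 32))) := by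
    intro τ
    rw [Periodic.norm_qParam]
    congr 1
    rw [UpperHalfPlane.coe_im]; ring
  have hgb : IsBoundedAtImInfty g := by
    have h1 : (fun τ : ℍ ↦ Periodic.qParam 32 τ) =O[atImInfty]
        fun τ : ℍ ↦ Real.exp (- (2 * π * τ.im * (1 / 32))) := by
      apply IsBigO.of_bound 1
      filter_upwards with τ
      rw [hnorm, one_mul]; exact le_abs_self _
    have h2 := h1.mul hbd
    refine h2.trans (IsBigO.of_bound 1 ?_)
    filter_upwards with τ
    rw [← Real.exp_add]; simp
  have hqd : Differentiable ℂ (Periodic.qParam 32) := Periodic.differentiable_qParam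
  have hgd : MDiff g := by
    apply mdiff_of_diff (F := fun z ↦ Periodic.qParam 32 z * F z)
    intro z hz
    exact (hqd z).mul (hF z hz)
  have hgp : Periodic (g ∘ ofComplex) (32 : ℝ) := by
    intro z
    by_cases hz : 0 < z.im
    · have hz' : 0 < (z + ((32 : ℝ) : ℂ)).im := by simpa using hz
      simp only [Function.comp, ofComplex_apply_of_im_pos hz, ofComplex_apply_of_im_pos hz', g]
      have h1 : Periodic.qParam 32 (z + ((32 : ℝ) : ℂ)) = Periodic.qParam 32 z := by
        simp only [Periodic.qParam]
        rw [Complex.exp_eq_exp_iff_exists_int]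
        exact ⟨1, by push_cast; ring⟩
      rw [h1]
      have h2 := hper z hz
      rw [← h2]; norm_num
    · have hz' : ¬ 0 < (z + ((32 : ℝ) : ℂ)).im := by simpa using hz
      simp only [Function.comp, ofComplex_apply_of_im_nonpos (not_lt.mp hz), ofComplex_apply_of_im_nonpos (not_lt.mp hz')]
  have hdec := UpperHalfPlane.exp_decay_sub_atImInfty (by norm_num) hgp hgd hgb
  set c0 := valueAtInfty g
  have hE : (fun τ : ℍ ↦ F τ - c0 * (Periodic.qParam 32 τ)⁻¹) =O[atImInfty] fun _ ↦ (1 : ℝ) := by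
    have h1 : (fun τ : ℍ ↦ (Periodic.qParam 32 τ)⁻¹) =O[atImInfty]
        fun τ : ℍ ↦ Real.exp ((2 * π * τ.im * (1 / 32))) := by
      apply IsBigO.of_bound 1
      filter_upwards with τ
      rw [norm_inv, hnorm, one_mul, Real.exp_neg, inv_inv]; exact le_abs_self _
    have h2 := h1.mul hdec
    have e1 : (fun τ : ℍ ↦ F τ - c0 * (Periodic.qParam 32 τ)⁻¹) =
        fun τ : ℍ ↦ (Periodic.qParam 32 τ)⁻¹ * (g τ - c0) := by
      funext τ
      have : Periodic.qParam 32 τ ≠ 0 := Complex.exp_ne_zero _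
      simp only [g]
      field_simp
    rw [e1]
    refine h2.trans (IsBigO.of_bound 1 ?_)
    filter_upwards with τ
    rw [← Real.exp_add]
    have : 2 * π * τ.im * (1 / 32) + -2 * π * τ.im / 32 = 0 := by ring
    rw [this]; simp
  have hm0 : (m : ℂ) ≠ 0 := by exact_mod_cast NeZero.ne m
  have hsum : ∀ τ : ℍ, ∑ j : ZMod m, c0 * (Periodic.qParam 32 ((τ : ℂ) + 32 * ((j.val : ℤ) : ℂ) / m))⁻¹ = 0 := by
    intro τ
    rw [← Finset.mul_sum]
    rw [sum_zmod_range fun j ↦ (Periodic.qParam 32 ((τ : ℂ) + 32 * ((j : ℤ) : ℂ) / m))⁻¹]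
    have h1 := sum_exp_root (D := m) (by omega) (-1)
    have hnd : ¬ (m : ℤ) ∣ -1 := by
      rw [Int.dvd_neg]
      intro h
      have := Int.le_of_dvd one_pos h
      omega
    rw [if_neg hnd] at h1
    have h2 : ∀ j ∈ Finset.range m, (Periodic.qParam 32 ((τ : ℂ) + 32 * ((j : ℤ) : ℂ) / m))⁻¹ =
      (Periodic.qParam 32 τ)⁻¹ * Complex.exp (2 * π * Complex.I * (((-1 : ℤ) : ℂ) * j / m)) := by
      intro j _
      simp only [Periodic.qParam, ← Complex.exp_neg, ← Complex.exp_add]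
      congr 1
      push_cast
      field_simp
      ring
    rw [Finset.sum_congr rfl h2, ← Finset.mul_sum, h1, mul_zero, mul_zero]
  have e2 : (fun τ : ℍ ↦ ∑ j : ZMod m, F (τ + 32 * ((j.val : ℤ) : ℂ) / m)) =
      fun τ : ℍ ↦ ∑ j : ZMod m, (F (τ + 32 * ((j.val : ℤ) : ℂ) / m) -
        c0 * (Periodic.qParam 32 ((τ : ℂ) + 32 * ((j.val : ℤ) : ℂ) / m))⁻¹) := by
    funext τ
    rw [Finset.sum_sub_distrib, hsum, sub_zero]
  rw [e2]
  refine IsBigO.fun_sum fun j _ ↦ ?_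
  let s : ℝ := 32 * (j.val : ℝ) / m
  have ht : Tendsto (fun τ : ℍ ↦ s +ᵥ τ) atImInfty atImInfty := by
    rw [atImInfty, tendsto_comap_iff]
    have : (UpperHalfPlane.im ∘ fun τ : ℍ ↦ s +ᵥ τ) = UpperHalfPlane.im := by
      funext τ; simp
    rw [this]
    exact tendsto_comap
  have h3 := hE.comp_tendsto ht
  refine h3.congr_left ?_
  intro τ
  have : ((s +ᵥ τ : ℍ) : ℂ) = (τ : ℂ) + 32 * ((j.val : ℤ) : ℂ) / m := by
    rw [UpperHalfPlane.coe_vadd]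
    simp only [s]
    push_cast
    ring
  simp only [Function.comp, this]

end B4
end Part12

section Part13
open UpperHalfPlane ModularForm SlashInvariantForm Filter Asymptotics Function Complex
open scoped MatrixGroups Topology Real Manifold Pointwise

namespace B4

lemma diff_fC {z : ℂ} (hz : 0 < z.im) : DifferentiableAt ℂ fC z := by
  have hz4 : 0 < (4 * z).im := by simpa using hz
  have h1 : DifferentiableAt ℂ (fun w : ℂ ↦ ModularForm.eta (4 * w)) z :=
    DifferentiableAt.fun_comp' z (differentiableAt_eta_of_mem_upperHalfPlaneSet hz4) (by fun_prop)
  exact h1.div (differentiableAt_eta_of_mem_upperHalfPlaneSet hz) (eta_ne_zero hz)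

lemma diff_DC {z : ℂ} (hz : 0 < z.im) : DifferentiableAt ℂ DC z :=
  (differentiableAt_eta_of_mem_upperHalfPlaneSet hz).pow 24

lemma diff_mob {a b c d : ℤ} (h : 0 < a * d - b * c) {z : ℂ} (hz : 0 < z.im) :
    DifferentiableAt ℂ (mob a b c d) z := by
  have hd := den_ne hz (cd_ne h)
  unfold mob
  exact DifferentiableAt.div (by fun_prop) (by fun_prop) hd

lemma im_nat_mul {M : ℕ} (hM : 0 < M) {z : ℂ} (hz : 0 < z.im) : 0 < ((M : ℂ) * z).im := by
  have : ((M : ℂ) * z) = ((M : ℝ) : ℂ) * z := by push_cast; ring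
  rw [this, Complex.im_ofReal_mul]
  positivity

lemma diff_KC {m : ℕ} [NeZero m] {z : ℂ} (hz : 0 < z.im) : DifferentiableAt ℂ (KC m) z := by
  have hm : 0 < m := Nat.pos_of_ne_zero (NeZero.ne m)
  have hMz := im_nat_mul (M := m ^ 2) (by positivity) hz
  have h1 : DifferentiableAt ℂ (f0 m) z := by
    unfold f0
    apply DifferentiableAt.const_mul
    apply DifferentiableAt.fun_sum
    intro j _
    exact DifferentiableAt.fun_comp' z (diff_fC (im_shift hz _)) (by fun_prop)
  have h2 : DifferentiableAt ℂ (fun w : ℂ ↦ DC ((m ^ 2 : ℕ) * w)) z :=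
    DifferentiableAt.fun_comp' z (diff_DC hMz) (by fun_prop)
  exact h1.mul (((diff_DC hz).pow _).div h2 (DC_ne hMz))

lemma gcd_bound {m : ℕ} (hm : 0 < m) {a b c d : ℤ} (h : a * d - b * c = 1) (j : ℤ) :
    (Int.gcd (m * a + 32 * j * c) (m * c) : ℝ) ≤ (m : ℝ) ^ 2 := by
  have h1 : ((Int.gcd (m * a + 32 * j * c) (m * c) : ℕ) : ℤ) ∣ (m : ℤ) ^ 2 := by
    have e : (m : ℤ) ^ 2 = (m * a + 32 * j * c) * (m * d) + (m * c) * (- m * b - 32 * j * d) := by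
      linear_combination (- (m : ℤ) ^ 2) * h
    rw [e]
    exact dvd_add ((Int.gcd_dvd_left _ _).mul_right _) ((Int.gcd_dvd_right _ _).mul_right _)
  have h2 := Int.le_of_dvd (by positivity) h1
  exact_mod_cast h2

lemma gcd_pos_real {a c : ℤ} (h : a ≠ 0 ∨ c ≠ 0) : (1 : ℝ) ≤ Int.gcd a c := by
  have : 0 < Int.gcd a c := by
    rw [Int.gcd_pos_iff]; exact h
  exact_mod_cast this

lemma ac_ne {a b c d : ℤ} (h : 0 < a * d - b * c) : a ≠ 0 ∨ c ≠ 0 := by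
  by_contra! h0
  obtain ⟨rfl, rfl⟩ := h0
  simp at h

lemma f0_growth {m : ℕ} [NeZero m] {a b c d : ℤ} (h : a * d - b * c = 1) :
    (fun τ : ℍ ↦ f0 m (mob a b c d τ)) =O[atImInfty]
      fun τ : ℍ ↦ Real.exp (2 * π * τ.im * ((m : ℝ) ^ 2 / 24)) := by
  have hm : 0 < m := Nat.pos_of_ne_zero (NeZero.ne m)
  have hmr : (0 : ℝ) < m := by exact_mod_cast hm
  unfold f0
  refine IsBigO.const_mul_left (IsBigO.fun_sum fun j _ ↦ ?_) _
  generalize ((j.val : ℤ)) = j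
  have hdet : (m * a + 32 * j * c) * (m * d) - (m * b + 32 * j * d) * (m * c) = (m : ℤ) ^ 2 := by
    linear_combination ((m : ℤ) ^ 2) * h
  have hdet4 : 4 * (m * a + 32 * j * c) * (m * d) - 4 * (m * b + 32 * j * d) * (m * c) = 4 * (m : ℤ) ^ 2 := by
    linear_combination (4 * (m : ℤ) ^ 2) * h
  have hpos : 0 < (m * a + 32 * j * c) * (m * d) - (m * b + 32 * j * d) * (m * c) := by
    rw [hdet]; positivity
  have h1 := fC_growth (r := (m : ℝ) ^ 2 / 24) hpos (by
    rw [hdet, hdet4]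
    have hb := gcd_bound hm h j
    push_cast
    have h3 : (Int.gcd (m * a + 32 * j * c) (m * c) : ℝ) ^ 2 / (m : ℝ) ^ 2 ≤ (m : ℝ) ^ 2 := by
      rw [div_le_iff₀ (by positivity)]
      calc _ ≤ ((m : ℝ) ^ 2) ^ 2 := by gcongr
        _ = _ := by ring
    have h4 : (0 : ℝ) ≤ (Int.gcd (4 * (m * a + 32 * j * c)) (m * c) : ℝ) ^ 2 / (4 * (m : ℝ) ^ 2) := by positivity
    linarith)
  refine h1.congr_left fun τ ↦ ?_
  have hd := den_ne τ.im_pos (cd_ne (a := a) (b := b) (c := c) (d := d) (by omega))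
  have hm0 : (m : ℂ) ≠ 0 := by exact_mod_cast hm.ne'
  refine congr_arg _ ?_
  rw [mob, mob]
  have e1 : ((m * a + 32 * j * c : ℤ) : ℂ) * τ + ((m * b + 32 * j * d : ℤ) : ℂ) =
    m * (a * τ + b) + 32 * j * (c * τ + d) := by push_cast; ring
  have e2 : ((m * c : ℤ) : ℂ) * τ + ((m * d : ℤ) : ℂ) = m * (c * τ + d) := by push_cast; ring
  rw [e1, e2]
  generalize (c * τ + d : ℂ) = w at hd
  generalize (a * τ + b : ℂ) = v
  field_simp

lemma f0_growth' {m : ℕ} [NeZero m] (hm2 : 2 ≤ m) {a b c d : ℤ} (h : a * d - b * c = 1)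
    (hc : (m : ℤ) ^ 2 ∣ c) :
    (fun τ : ℍ ↦ f0 m (mob a b c d τ)) =O[atImInfty] fun _ ↦ (1 : ℝ) := by
  have hpos : 0 < a * d - b * c := by omega
  have e : (fun τ : ℍ ↦ f0 m (mob a b c d τ)) = fun τ : ℍ ↦
      (1 / m : ℂ) * ∑ j : ZMod m, fC (mob a b c d (τ + 32 * ((j.val : ℤ) : ℂ) / m)) :=
    funext fun τ ↦ f0_mob h hc τ.im_pos
  rw [e]
  refine IsBigO.const_mul_left (avg_bdd (F := fun z ↦ fC (mob a b c d z)) hm2 ?_ ?_ ?_) _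
  · intro z hz
    exact DifferentiableAt.fun_comp' z (diff_fC (mob_im hpos hz)) (diff_mob hpos hz)
  · intro z hz
    have h1 := fC_congr (a' := a) (b' := b + 32 * a) (c' := c) (d' := d + 32 * c) h (by linarith)
      (by simp) (by simp) (by simp) (by simp) hz
    rw [← h1]
    refine congr_arg _ ?_
    rw [mob, mob]
    push_cast
    congr 1 <;> ring
  · apply fC_growth hpos
    have h4 : 4 * a * d - 4 * b * c = 4 := by linarith
    rw [h, h4]
    have hg : Int.gcd a c = 1 := by
      rw [← Int.isCoprime_iff_gcd_eq_one]
      exact ⟨d, -b, by linarith⟩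
    have hg4 := gcd_pos_real (a := 4 * a) (c := c) (by
      rcases ac_ne hpos with h | h
      · left; omega
      · right; exact h)
    rw [hg]
    push_cast
    nlinarith

lemma KC_bdd {m : ℕ} [NeZero m] (hm2 : 2 ≤ m) {a b c d : ℤ} (h : a * d - b * c = 1) :
    (fun τ : ℍ ↦ KC m (mob a b c d τ) * ((c * τ + d : ℂ) ^ (12 * (m ^ 2 - 1)))⁻¹)
      =O[atImInfty] fun _ ↦ (1 : ℝ) := by
  have hm : 0 < m := by omega
  have hmr : (0 : ℝ) < (m : ℝ) ^ 2 := by positivity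
  have hMZ : (0 : ℤ) < ((m ^ 2 : ℕ) : ℤ) := by positivity
  have hpos : 0 < a * d - b * c := by omega
  have hdetM : (((m ^ 2 : ℕ) : ℤ) * a) * d - (((m ^ 2 : ℕ) : ℤ) * b) * c = ((m ^ 2 : ℕ) : ℤ) := by
    linear_combination ((m ^ 2 : ℕ) : ℤ) * h
  have hY := DC_theta_mob (a := ((m ^ 2 : ℕ) : ℤ) * a) (b := ((m ^ 2 : ℕ) : ℤ) * b) (c := c) (d := d)
    (by rw [hdetM]; exact hMZ)
  rw [hdetM] at hY
  have hX := DC_theta.1.pow (m ^ 2)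
  rw [funext fun τ : ℍ ↦ KC_mob (m := m) h τ.im_pos]
  set g : ℕ := Int.gcd (((m ^ 2 : ℕ) : ℤ) * a) c with hg
  have hgM : g ∣ m ^ 2 := by
    have : (g : ℤ) ∣ ((m ^ 2 : ℕ) : ℤ) := by
      rw [← hdetM]
      exact dvd_sub ((Int.gcd_dvd_left _ _).mul_right _) ((Int.gcd_dvd_right _ _).mul_left _)
    exact_mod_cast this
  have hQ : (fun τ : ℍ ↦ DC τ ^ (m ^ 2) /
        (DC (mob ((m ^ 2 : ℕ) * a) ((m ^ 2 : ℕ) * b) c d τ) * ((c * τ + d : ℂ) ^ 12)⁻¹)) =O[atImInfty]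
      fun τ : ℍ ↦ Real.exp (2 * π * τ.im * ((g : ℝ) ^ 2 / (m : ℝ) ^ 2 - (m : ℝ) ^ 2)) := by
    have h1 := hX.mul hY.inv.1
    refine (h1.congr_left fun τ ↦ by rw [div_eq_mul_inv]).congr_right fun τ ↦ ?_
    rw [← Real.exp_nat_mul, ← Real.exp_neg, ← Real.exp_add]
    congr 1
    push_cast
    ring
  by_cases hc : (m : ℤ) ^ 2 ∣ c
  · have h1 := (f0_growth' hm2 h hc).mul hQ
    refine h1.trans (IsBigO.of_bound 1 ?_)
    filter_upwards with τ
    have hgl : (g : ℝ) ≤ (m : ℝ) ^ 2 := by exact_mod_cast Nat.le_of_dvd (by positivity) hgM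
    rw [one_mul, one_mul, norm_one, Real.norm_of_nonneg (Real.exp_pos _).le, Real.exp_le_one_iff]
    have h2 : (g : ℝ) ^ 2 / (m : ℝ) ^ 2 - (m : ℝ) ^ 2 ≤ 0 := by
      rw [sub_nonpos, div_le_iff₀ hmr]
      calc _ ≤ ((m : ℝ) ^ 2) ^ 2 := by gcongr
        _ = _ := by ring
    have := τ.im_pos
    exact mul_nonpos_of_nonneg_of_nonpos (by positivity) h2
  · have h1 := (f0_growth (m := m) h).mul hQ
    refine h1.trans (IsBigO.of_bound 1 ?_)
    filter_upwards with τ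
    have hgl : 2 * (g : ℝ) ≤ (m : ℝ) ^ 2 := by
      obtain ⟨e, he⟩ := hgM
      have he1 : e ≠ 1 := by
        rintro rfl
        apply hc
        have : (g : ℤ) ∣ c := Int.gcd_dvd_right _ _
        rw [mul_one] at he
        rw [← he] at this
        exact_mod_cast this
      have he0 : e ≠ 0 := by
        rintro rfl
        rw [mul_zero] at he
        have : 0 < m ^ 2 := by positivity
        omega
      have : 2 * g ≤ m ^ 2 := by
        rw [he]; nlinarith [show 2 ≤ e by omega, Nat.zero_le g]
      exact_mod_cast this
    rw [one_mul, norm_one, ← Real.exp_add, Real.norm_of_nonneg (Real.exp_pos _).le, Real.exp_le_one_iff,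
      ← mul_add]
    have h2 : (g : ℝ) ^ 2 / (m : ℝ) ^ 2 ≤ (m : ℝ) ^ 2 / 4 := by
      rw [div_le_iff₀ hmr]
      have : (0 : ℝ) ≤ g := by positivity
      nlinarith
    have := τ.im_pos
    exact mul_nonpos_of_nonneg_of_nonpos (by positivity) (by linarith)

lemma exists_form {m : ℕ} [NeZero m] (hm2 : 2 ≤ m) :
    ∃ F : ModularForm (GN (32 * m ^ 2)) ((12 * (m ^ 2 - 1) : ℕ) : ℤ), ∀ τ : ℍ, F τ = KC m τ := by
  have hsl : ∀ (γ : SL(2, ℤ)) (τ : ℍ), ((fun τ : ℍ ↦ KC m τ) ∣[((12 * (m ^ 2 - 1) : ℕ) : ℤ)] γ) τ =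
      KC m (mob (γ 0 0) (γ 0 1) (γ 1 0) (γ 1 1) τ) * ((γ 1 0 * τ + γ 1 1 : ℂ) ^ (12 * (m ^ 2 - 1)))⁻¹ := by
    intro γ τ
    rw [ModularForm.SL_slash_apply]
    have h2 : ((γ • τ : ℍ) : ℂ) = mob (γ 0 0) (γ 0 1) (γ 1 0) (γ 1 1) τ := by
      rw [UpperHalfPlane.coe_specialLinearGroup_apply, mob]
      simp
    have h5 : denom γ τ = γ 1 0 * τ + γ 1 1 := by
      rw [denom]
      simp
    rw [h2, h5, zpow_neg, zpow_natCast]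
  have hdet : ∀ γ : SL(2, ℤ), γ 0 0 * γ 1 1 - γ 0 1 * γ 1 0 = 1 := fun γ ↦ by
    rw [← Matrix.det_fin_two, γ.det_coe]
  refine ⟨⟨⟨fun τ : ℍ ↦ KC m τ, ?_⟩, ?_, ?_⟩, fun τ ↦ rfl⟩
  · rintro _ ⟨δ, hδ, rfl⟩
    change ((fun τ : ℍ ↦ KC m τ) ∣[((12 * (m ^ 2 - 1) : ℕ) : ℤ)] δ) = _
    funext τ
    rw [hsl]
    obtain ⟨h1, h2, h3, h4⟩ := CongruenceSubgroup.Gamma_mem.mp hδ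
    refine KC_inv (hdet δ) ?_ ?_ ?_ ?_ τ.im_pos
    · rw [← ZMod.intCast_zmod_eq_zero_iff_dvd]; push_cast; rw [h1, sub_self]
    · rw [← ZMod.intCast_zmod_eq_zero_iff_dvd]; exact h2
    · rw [← ZMod.intCast_zmod_eq_zero_iff_dvd]; exact h3
    · rw [← ZMod.intCast_zmod_eq_zero_iff_dvd]; push_cast; rw [h4, sub_self]
  · exact mdiff_of_diff fun z hz ↦ diff_KC hz
  · intro c hc
    rw [Subgroup.IsArithmetic.isCusp_iff_isCusp_SL2Z] at hc
    rw [OnePoint.isBoundedAt_iff_forall_SL2Z hc]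
    intro γ _
    change IsBoundedAtImInfty ((fun τ : ℍ ↦ KC m τ) ∣[((12 * (m ^ 2 - 1) : ℕ) : ℤ)] γ)
    rw [funext (hsl γ)]
    exact KC_bdd hm2 (hdet γ)

end B4
end Part13

section Part14
open Filter Topology PowerSeries
open scoped PowerSeries.WithPiTopology

namespace B4

section Formal

lemma multipliable_EZ (R : Type*) [CommRing R] [TopologicalSpace R] {M : ℕ} (hM : 0 < M) :
    Multipliable fun n : ℕ ↦ (1 : R⟦X⟧) - X ^ ((n + 1) * M) := by
  nontriviality R using Subsingleton.eq_zero (α := R⟦X⟧)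
  simp_rw [sub_eq_add_neg]
  apply WithPiTopology.multipliable_one_add_of_tendsto_order_atTop_nhds_top
  refine ENat.tendsto_nhds_top_iff_natCast_lt.mpr (fun n ↦ Filter.eventually_atTop.mpr ⟨n, ?_⟩)
  intro m hm
  rw [order_neg, order_X_pow]
  norm_cast
  nlinarith

/-- The formal Euler product. -/
noncomputable def EZ (M : ℕ) : ℤ⟦X⟧ := ∏' n : ℕ, (1 - X ^ ((n + 1) * M))

lemma hasProd_EZ {M : ℕ} (hM : 0 < M) :
    HasProd (fun n : ℕ ↦ (1 : ℤ⟦X⟧) - X ^ ((n + 1) * M)) (EZ M) := (multipliable_EZ ℤ hM).hasProd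

lemma coeff_EZ_eventually {M : ℕ} (hM : 0 < M) (k : ℕ) :
    ∀ᶠ n in atTop, coeff k (∏ i ∈ Finset.range n, ((1 : ℤ⟦X⟧) - X ^ ((i + 1) * M))) =
      coeff k (EZ M) := by
  have h := (hasProd_EZ hM).tendsto_prod_nat
  have h2 := ((WithPiTopology.continuous_coeff (R := ℤ) k).tendsto _).comp h
  have h3 := h2.eventually (IsOpen.mem_nhds (isOpen_discrete {coeff k (EZ M)}) rfl)
  exact h3

lemma constantCoeff_EZ {M : ℕ} (hM : 0 < M) : constantCoeff (EZ M) = 1 := by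
  obtain ⟨n, hn⟩ := (coeff_EZ_eventually hM 0).exists
  rw [coeff_zero_eq_constantCoeff] at hn
  rw [← hn, map_prod]
  refine Finset.prod_eq_one fun i _ ↦ ?_
  have : (i + 1) * M ≠ 0 := by positivity
  simp [this]

lemma map_continuous (m : ℕ) :
    Continuous (PowerSeries.map (Int.castRingHom (ZMod m))) := by
  rw [continuous_iff_continuousAt]
  intro p
  rw [ContinuousAt, WithPiTopology.tendsto_iff_coeff_tendsto]
  intro d
  simp only [coeff_map]
  exact (continuous_of_discreteTopology.tendsto _).comp
    ((WithPiTopology.continuous_coeff (R := ℤ) d).tendsto p)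

lemma EZ_pow_char {m : ℕ} (hm : m.Prime) :
    PowerSeries.map (Int.castRingHom (ZMod m)) (EZ 1 ^ (m ^ 2)) =
      PowerSeries.map (Int.castRingHom (ZMod m)) (EZ (m ^ 2)) := by
  have : Fact m.Prime := ⟨hm⟩
  have h1 := ((hasProd_EZ one_pos).pow (m ^ 2)).map (PowerSeries.map (Int.castRingHom (ZMod m)))
    (map_continuous m)
  have h2 := (hasProd_EZ (M := m ^ 2) (pow_pos hm.pos 2)).map
    (PowerSeries.map (Int.castRingHom (ZMod m))) (map_continuous m)
  refine h1.unique ?_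
  refine h2.congr_fun ?_ |> fun h ↦ h
  intro n
  have : CharP ((ZMod m)⟦X⟧) m := charP_of_injective_algebraMap
    (R := ZMod m) (A := (ZMod m)⟦X⟧) (FaithfulSMul.algebraMap_injective _ _) m
  simp only [Function.comp, map_pow, map_sub, map_one, map_X, mul_one]
  rw [sub_pow_char_pow, one_pow, pow_mul]

lemma bReg_mul_EZ :
    (PowerSeries.mk fun n ↦ (bReg 4 n : ℤ)) * EZ 1 = EZ 4 := by
  have h : ∀ n, bReg 4 n = (Nat.Partition.restricted n (¬ 4 ∣ ·)).card := by
    intro n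
    unfold bReg Nat.Partition.restricted
    congr!
  simp_rw [h]
  have h1 := (Nat.Partition.hasProd_powerSeriesMk_card_restricted ℤ (¬ 4 ∣ ·)).mul
    (hasProd_EZ one_pos)
  refine h1.unique ?_
  have hinj : Function.Injective (fun i : ℕ ↦ (i + 1) * 4 - 1) := by
    intro a b h; simp only at h; omega
  rw [← hinj.hasProd_iff]
  · refine (hasProd_EZ (by norm_num : 0 < 4)).congr_fun ?_ |> fun h ↦ h
    intro i
    have : (i + 1) * 4 - 1 + 1 = (i + 1) * 4 := by omega
    simp [this]
  · intro x hx
    have : ¬ 4 ∣ x + 1 := by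
      rintro ⟨c, hc⟩
      exact hx ⟨c - 1, by simp only; omega⟩
    rw [if_pos this]
    simp_rw [pow_mul, pow_one]
    rw [WithPiTopology.tsum_pow_mul_one_sub_of_constantCoeff_eq_zero (by simp)]

/-- The inverse of the formal Euler product. -/
noncomputable def UZ (M : ℕ) : ℤ⟦X⟧ := invOfUnit (EZ M) 1

lemma EZ_mul_UZ {M : ℕ} (hM : 0 < M) : EZ M * UZ M = 1 :=
  mul_invOfUnit _ _ (by simpa using constantCoeff_EZ hM)

lemma bReg_eq : (PowerSeries.mk fun n ↦ (bReg 4 n : ℤ)) = EZ 4 * UZ 1 := by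
  rw [← bReg_mul_EZ, mul_assoc, EZ_mul_UZ one_pos, mul_one]

/-- The series of `Δ(τ)^M / Δ(Mτ)`. -/
noncomputable def HZ (m : ℕ) : ℤ⟦X⟧ := (EZ 1 ^ (m ^ 2)) ^ 24 * UZ (m ^ 2) ^ 24

lemma HZ_mod {m : ℕ} (hm : m.Prime) :
    PowerSeries.map (Int.castRingHom (ZMod m)) (HZ m) = 1 := by
  rw [HZ, map_mul, map_pow, EZ_pow_char hm, ← map_pow, ← map_mul, ← mul_pow,
    EZ_mul_UZ (pow_pos hm.pos 2), one_pow, map_one]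

end Formal

section Analytic

/-- `p` represents `g` on the unit disc. -/
def Rep (g : ℂ → ℂ) (p : ℂ⟦X⟧) : Prop :=
  ∀ q : ℂ, ‖q‖ < 1 → HasSum (fun n ↦ coeff n p * q ^ n) (g q)

lemma hasSum_coeff_mul {p r : ℂ⟦X⟧} {q u v : ℂ} (h1 : HasSum (fun n ↦ coeff n p * q ^ n) u)
    (h2 : HasSum (fun n ↦ coeff n r * q ^ n) v) :
    HasSum (fun n ↦ coeff n (p * r) * q ^ n) (u * v) := by
  have s1 := h1.summable.norm
  have s2 := h2.summable.norm
  have s3 := summable_norm_sum_mul_antidiagonal_of_summable_norm s1 s2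
  have s4 := tsum_mul_tsum_eq_tsum_sum_antidiagonal_of_summable_norm s1 s2
  rw [h1.tsum_eq, h2.tsum_eq] at s4
  simp only [s4]
  convert! s3.of_norm.hasSum using 1
  ext n
  rw [coeff_mul, Finset.sum_mul]
  refine Finset.sum_congr rfl fun x hx ↦ ?_
  rw [← Finset.HasAntidiagonal.mem_antidiagonal.mp hx, pow_add]; ring

lemma Rep.mul {g h : ℂ → ℂ} {p r : ℂ⟦X⟧} (hp : Rep g p) (hr : Rep h r) :
    Rep (fun q ↦ g q * h q) (p * r) := fun q hq ↦ hasSum_coeff_mul (hp q hq) (hr q hq)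

lemma Rep.one : Rep (fun _ ↦ 1) 1 := by
  intro q _
  convert! hasSum_ite_eq 0 (1 : ℂ) using 1
  ext n
  rw [coeff_one]
  split_ifs with h
  · simp [h]
  · simp

lemma Rep.pow {g : ℂ → ℂ} {p : ℂ⟦X⟧} (hp : Rep g p) (k : ℕ) : Rep (fun q ↦ g q ^ k) (p ^ k) := by
  induction k with
  | zero => simpa using Rep.one
  | succ k ih => simp_rw [pow_succ]; exact ih.mul hp

lemma Rep.unique {g : ℂ → ℂ} {p r : ℂ⟦X⟧} (hp : Rep g p) (hr : Rep g r) : p = r := by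
  have := coeff_eq_zero_of_hasSum_zero one_pos (c := fun n ↦ coeff n p - coeff n r) (by
    intro τ
    have hq : ‖Function.Periodic.qParam 1 (τ : ℂ)‖ < 1 := Function.Periodic.norm_qParam_lt_one one_pos τ.im_pos
    have := (hp _ hq).sub (hr _ hq)
    rw [sub_self] at this
    simpa [sub_mul] using this)
  ext n
  exact sub_eq_zero.mp (congr_fun this n)

lemma Rep.exists {g : ℂ → ℂ} (hg : DifferentiableOn ℂ g (Metric.ball 0 1)) : ∃ p, Rep g p := by
  refine ⟨PowerSeries.mk fun n ↦ ((n.factorial : ℂ))⁻¹ * iteratedDeriv n g 0, fun q hq ↦ ?_⟩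
  have := Complex.hasSum_taylorSeries_on_ball (f := g) (c := 0) (r := 1) (z := q) hg (by simpa using hq)
  convert! this using 1
  ext n
  simp; ring

/-- the analytic Euler product -/
noncomputable def EA (q : ℂ) : ℂ := ∏' n : ℕ, (1 - q ^ (n + 1))

lemma EA_ne {q : ℂ} (hq : ‖q‖ < 1) : EA q ≠ 0 := by
  refine tprod_one_add_ne_zero_of_summable (f := fun n : ℕ ↦ - q ^ (n + 1)) ?_ ?_
  · intro i h
    have : q ^ (i + 1) = 1 := by linear_combination -h
    have h2 := congr_arg norm this
    rw [norm_pow, norm_one] at h2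
    have := pow_lt_one₀ (norm_nonneg q) hq (i.add_one_ne_zero)
    linarith
  · simpa using (summable_nat_add_iff 1).mpr (summable_geometric_of_lt_one (norm_nonneg _) hq)

end Analytic

end B4
end Part14

section Part15
open Filter Topology PowerSeries
open scoped PowerSeries.WithPiTopology

namespace B4

/-- partial Euler products -/
noncomputable def PZ (M n : ℕ) : ℤ⟦X⟧ := ∏ i ∈ Finset.range n, ((1 : ℤ⟦X⟧) - X ^ ((i + 1) * M))

lemma PZ_bound (M n : ℕ) {r : ℝ} (hr : 0 ≤ r) (K : ℕ) :
    ∑ k ∈ Finset.range K, |((coeff k (PZ M n) : ℤ) : ℝ)| * r ^ k ≤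
      ∏ i ∈ Finset.range n, (1 + r ^ ((i + 1) * M)) := by
  induction n generalizing K with
  | zero =>
    simp only [PZ, Finset.range_zero, Finset.prod_empty, coeff_one]
    have : ∀ k ∈ Finset.range K, |(((if k = 0 then 1 else 0 : ℤ)) : ℝ)| * r ^ k =
        if k = 0 then 1 else 0 := by
      intro k _; split_ifs with h <;> simp [h]
    rw [Finset.sum_congr rfl this, Finset.sum_ite_eq']
    split_ifs <;> simp
  | succ n ih =>
    have e : PZ M (n + 1) = PZ M n * (1 - X ^ ((n + 1) * M)) := by
      rw [PZ, Finset.prod_range_succ, PZ]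
    set d := (n + 1) * M with hd
    have h1 : ∀ k ∈ Finset.range K, |((coeff k (PZ M (n + 1)) : ℤ) : ℝ)| * r ^ k ≤
        |((coeff k (PZ M n) : ℤ) : ℝ)| * r ^ k +
        |(((if d ≤ k then coeff (k - d) (PZ M n) else 0 : ℤ)) : ℝ)| * r ^ k := by
      intro k _
      rw [e, mul_sub, mul_one, map_sub, coeff_mul_X_pow', ← add_mul]
      gcongr
      push_cast
      exact abs_sub _ _
    refine (Finset.sum_le_sum h1).trans ?_
    rw [Finset.sum_add_distrib, Finset.prod_range_succ, mul_add, mul_one]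
    refine add_le_add (ih K) ?_
    calc _ ≤ ∑ k ∈ Finset.range (d + K),
          |(((if d ≤ k then coeff (k - d) (PZ M n) else 0 : ℤ)) : ℝ)| * r ^ k := by
          apply Finset.sum_le_sum_of_subset_of_nonneg
          · intro x hx; simp only [Finset.mem_range] at hx ⊢; omega
          · intro i _ _; positivity
      _ = (∑ k ∈ Finset.range K, |((coeff k (PZ M n) : ℤ) : ℝ)| * r ^ k) * r ^ d := by
          rw [Finset.sum_range_add, Finset.sum_eq_zero, zero_add, Finset.sum_mul]
          · refine Finset.sum_congr rfl fun k _ ↦ ?_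
            rw [if_pos (by omega), Nat.add_sub_cancel_left, pow_add]; ring
          · intro k hk
            rw [if_neg (by simpa using hk)]; simp
      _ ≤ _ := by gcongr; exact ih K

lemma PZ_coeff_bound {M : ℕ} (hM : 0 < M) {r : ℝ} (hr : 0 ≤ r) (hr1 : r < 1) (n k : ℕ) :
    |((coeff k (PZ M n) : ℤ) : ℝ)| * r ^ k ≤ Real.exp (1 / (1 - r)) := by
  have h1 := Finset.single_le_sum (f := fun k ↦ |((coeff k (PZ M n) : ℤ) : ℝ)| * r ^ k)
    (fun i _ ↦ by positivity) (Finset.mem_range.mpr (Nat.lt_succ_self k))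
  refine h1.trans ((PZ_bound M n hr _).trans ?_)
  calc _ ≤ ∏ i ∈ Finset.range n, Real.exp (r ^ ((i + 1) * M)) := by
        apply Finset.prod_le_prod
        · intro i _; positivity
        · intro i _; rw [add_comm]; exact Real.add_one_le_exp _
    _ = Real.exp (∑ i ∈ Finset.range n, r ^ ((i + 1) * M)) := (Real.exp_sum _ _).symm
    _ ≤ _ := by
        apply Real.exp_le_exp.mpr
        calc _ ≤ ∑ i ∈ Finset.range n, r ^ i := by
              apply Finset.sum_le_sum
              intro i _
              exact pow_le_pow_of_le_one hr hr1.le (by nlinarith)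
          _ ≤ _ := by
              rw [one_div, ← tsum_geometric_of_lt_one hr hr1]
              exact (summable_geometric_of_lt_one hr hr1).sum_le_tsum _ (fun i _ ↦ by positivity)

/-- The complexification of an integral power series. -/
noncomputable abbrev mapC : ℤ⟦X⟧ →+* ℂ⟦X⟧ := PowerSeries.map (Int.castRingHom ℂ)

lemma Rep_one_sub (d : ℕ) : Rep (fun q ↦ 1 - q ^ d) (1 - X ^ d) := by
  intro q hq
  have h2 : HasSum (fun n ↦ coeff n (X ^ d : ℂ⟦X⟧) * q ^ n) (q ^ d) := by
    convert! hasSum_ite_eq d (q ^ d) using 1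
    ext n
    rw [coeff_X_pow]
    split_ifs with h
    · simp [h]
    · simp
  have := (Rep.one q hq).sub h2
  simpa only [map_sub, sub_mul] using this

lemma Rep_PZ (M n : ℕ) :
    Rep (fun q ↦ ∏ i ∈ Finset.range n, (1 - (q ^ M) ^ (i + 1))) (mapC (PZ M n)) := by
  induction n with
  | zero => simpa [PZ] using Rep.one
  | succ n ih =>
    have e : PZ M (n + 1) = PZ M n * (1 - X ^ ((n + 1) * M)) := by
      rw [PZ, Finset.prod_range_succ, PZ]
    rw [e, map_mul]
    simp_rw [Finset.prod_range_succ]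
    refine ih.mul ?_
    have := Rep_one_sub ((n + 1) * M)
    simp only [map_sub, map_one, map_pow, map_X]
    convert! this using 2
    rw [← pow_mul, mul_comm]

lemma Rep_EZ {M : ℕ} (hM : 0 < M) : Rep (fun q ↦ EA (q ^ M)) (mapC (EZ M)) := by
  intro q hq
  obtain ⟨r, hr, hr1⟩ := exists_between hq
  have hr0 : 0 < r := (norm_nonneg q).trans_lt hr
  set C := Real.exp (1 / (1 - r))
  have hbs : Summable fun k : ℕ ↦ C * (‖q‖ / r) ^ k :=
    (summable_geometric_of_lt_one (by positivity) ((div_lt_one hr0).mpr hr)).mul_left C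
  have hb : ∀ n k, ‖coeff k (mapC (PZ M n)) * q ^ k‖ ≤ C * (‖q‖ / r) ^ k := by
    intro n k
    have h := PZ_coeff_bound hM hr0.le hr1 n k
    rw [norm_mul, norm_pow, div_pow, mul_div_assoc', le_div_iff₀ (by positivity)]
    simp only [coeff_map, eq_intCast, Complex.norm_intCast]
    nlinarith [mul_le_mul_of_nonneg_right h (by positivity : 0 ≤ ‖q‖ ^ k)]
  have hab : ∀ k, ∀ᶠ n in atTop, coeff k (mapC (PZ M n)) * q ^ k = coeff k (mapC (EZ M)) * q ^ k := by
    intro k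
    filter_upwards [coeff_EZ_eventually hM k] with n hn
    rw [coeff_map, coeff_map, ← hn, PZ]
  have ht := tendsto_tsum_of_dominated_convergence (𝓕 := atTop) hbs
    (fun k ↦ tendsto_nhds_of_eventually_eq (hab k)) (.of_forall hb)
  have hs : Summable fun k ↦ coeff k (mapC (EZ M)) * q ^ k := by
    refine hbs.of_norm_bounded fun k ↦ ?_
    obtain ⟨n, hn⟩ := (hab k).exists
    rw [← hn]; exact hb n k
  have h1 : ∀ n, ∑' k, coeff k (mapC (PZ M n)) * q ^ k =
      ∏ i ∈ Finset.range n, (1 - (q ^ M) ^ (i + 1)) := fun n ↦ (Rep_PZ M n q hq).tsum_eq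
  simp_rw [h1] at ht
  have hqM : ‖q ^ M‖ < 1 := by rw [norm_pow]; exact pow_lt_one₀ (norm_nonneg q) hq hM.ne.symm
  have h2 := (ModularForm.multipliable_one_sub_pow hqM).hasProd.tendsto_prod_nat
  have h3 := tendsto_nhds_unique ht h2
  simp only [EA]
  rw [← h3]
  exact hs.hasSum

lemma Rep_UZ {M : ℕ} (hM : 0 < M) : Rep (fun q ↦ (EA (q ^ M))⁻¹) (mapC (UZ M)) := by
  have hball : ∀ q ∈ Metric.ball (0 : ℂ) 1, q ^ M ∈ Metric.ball (0 : ℂ) 1 := by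
    intro q hq
    simp only [Metric.mem_ball, dist_zero_right] at hq ⊢
    rw [norm_pow]; exact pow_lt_one₀ (norm_nonneg q) hq hM.ne.symm
  have hd : DifferentiableOn ℂ (fun q ↦ (EA (q ^ M))⁻¹) (Metric.ball 0 1) := by
    refine DifferentiableOn.fun_inv ?_ ?_
    · exact ModularForm.differentiableOn_tprod_one_sub_pow.fun_comp (by fun_prop) hball
    · intro q hq
      exact EA_ne (by simpa using hball q hq)
  obtain ⟨p, hp⟩ := Rep.exists hd
  have h1 : Rep (fun _ ↦ 1) (mapC (EZ M) * p) := by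
    intro q hq
    have := (Rep_EZ hM).mul hp q hq
    have hne : EA (q ^ M) ≠ 0 := EA_ne (by simpa using hball q (by simpa using hq))
    simp only [mul_inv_cancel₀ hne] at this
    exact this
  have h2 := h1.unique Rep.one
  have h3 : mapC (EZ M) * mapC (UZ M) = 1 := by rw [← map_mul, EZ_mul_UZ hM, map_one]
  have : p = mapC (UZ M) := by
    calc p = (mapC (EZ M) * mapC (UZ M)) * p := by rw [h3, one_mul]
      _ = mapC (UZ M) * (mapC (EZ M) * p) := by ring
      _ = _ := by rw [h2, mul_one]
  rwa [← this]

lemma Rep_bReg : Rep (fun q ↦ EA (q ^ 4) * (EA q)⁻¹)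
    (mapC (PowerSeries.mk fun n ↦ (bReg 4 n : ℤ))) := by
  rw [bReg_eq, map_mul]
  have := (Rep_EZ (M := 4) (by norm_num)).mul (Rep_UZ one_pos)
  simpa only [pow_one] using this

lemma Rep_HZ {m : ℕ} (hm : 0 < m) :
    Rep (fun q ↦ (EA q ^ (m ^ 2)) ^ 24 * ((EA (q ^ (m ^ 2)))⁻¹) ^ 24) (mapC (HZ m)) := by
  rw [HZ, map_mul, map_pow, map_pow, map_pow]
  have := (((Rep_EZ one_pos).pow (m ^ 2)).pow 24).mul ((Rep_UZ (pow_pos hm 2)).pow 24)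
  simpa only [pow_one] using this

end B4
end Part15

section Part16
open Filter Topology PowerSeries
open scoped PowerSeries.WithPiTopology Real

namespace B4

lemma eta_eq (z : ℂ) :
    ModularForm.eta z = Function.Periodic.qParam 24 z * EA (Function.Periodic.qParam 1 z) := rfl

lemma qParam_nat_mul (h : ℝ) (M : ℕ) (z : ℂ) :
    Function.Periodic.qParam h (M * z) = Function.Periodic.qParam h z ^ M := by
  simp only [Function.Periodic.qParam, ← Complex.exp_nat_mul]
  rw [mul_left_comm, mul_div_assoc]

lemma norm_q_lt {z : ℂ} (hz : 0 < z.im) : ‖Function.Periodic.qParam 1 z‖ < 1 :=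
  Function.Periodic.norm_qParam_lt_one one_pos hz

lemma hasSum_fC {z : ℂ} (hz : 0 < z.im) :
    HasSum (fun n ↦ (bReg 4 n : ℂ) * Complex.exp (2 * π * Complex.I * z * ((8 * n + 1) / 8))) (fC z) := by
  have h := (Rep_bReg _ (norm_q_lt hz)).mul_left (Complex.exp (2 * π * Complex.I * z / 8))
  have e1 : Complex.exp (2 * π * Complex.I * z / 8) *
      (EA (Function.Periodic.qParam 1 z ^ 4) * (EA (Function.Periodic.qParam 1 z))⁻¹) = fC z := by
    have h4 : Function.Periodic.qParam 1 (4 * z) = Function.Periodic.qParam 1 z ^ 4 := by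
      exact_mod_cast qParam_nat_mul 1 4 z
    rw [fC, eta_eq, eta_eq, h4, mul_div_mul_comm, div_eq_mul_inv (EA _)]
    refine congr_arg (· * _) ?_
    rw [Function.Periodic.qParam, Function.Periodic.qParam, ← Complex.exp_sub]
    refine congr_arg _ ?_
    push_cast
    ring
  simp only [e1] at h
  convert! h using 1
  ext n
  simp only [coeff_map, coeff_mk, Function.Periodic.qParam, ← Complex.exp_nat_mul]
  rw [mul_left_comm, ← Complex.exp_add]
  simp only [eq_intCast, Int.cast_natCast]
  refine congr_arg _ (congr_arg _ ?_)
  push_cast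
  ring

lemma hasSum_f0 {m : ℕ} [NeZero m] {z : ℂ} (hz : 0 < z.im) :
    HasSum (fun n : ℕ ↦ (if (m : ℤ) ∣ ((4 * (8 * n + 1) : ℕ) : ℤ) then (bReg 4 n : ℂ) else 0) *
      Complex.exp (2 * π * Complex.I * z * ((8 * n + 1) / 8))) (f0 m z) := by
  have hm : (m : ℂ) ≠ 0 := by exact_mod_cast NeZero.ne m
  have h1 : HasSum _ (∑ j : ZMod m, fC (z + 32 * ((j.val : ℤ) : ℂ) / m)) :=
    hasSum_sum fun j _ ↦ hasSum_fC (im_shift hz (j.val : ℤ))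
  have h2 := h1.mul_left (1 / m : ℂ)
  rw [f0]
  convert! h2 using 1
  ext n
  have h3 : ∀ j : ZMod m, (bReg 4 n : ℂ) *
      Complex.exp (2 * π * Complex.I * (z + 32 * ((j.val : ℤ) : ℂ) / m) * ((8 * n + 1) / 8)) =
      ((bReg 4 n : ℂ) * Complex.exp (2 * π * Complex.I * z * ((8 * n + 1) / 8))) *
       Complex.exp (2 * π * Complex.I * ((((4 * (8 * n + 1) : ℕ) : ℤ) : ℂ) * (j.val : ℕ) / m)) := by
    intro j
    rw [mul_assoc (bReg 4 n : ℂ) (Complex.exp _), ← Complex.exp_add]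
    refine congr_arg _ (congr_arg _ ?_)
    push_cast
    ring
  rw [Finset.sum_congr rfl fun j _ ↦ h3 j, ← Finset.mul_sum,
    sum_zmod_range (fun j ↦ Complex.exp (2 * π * Complex.I * ((((4 * (8 * n + 1) : ℕ) : ℤ) : ℂ) * (j : ℕ) / m))),
    sum_exp_root (Nat.pos_of_ne_zero (NeZero.ne m))]
  split_ifs
  · field_simp
  · simp

/-- the exponents occurring in `f0` -/
def ix (m n : ℕ) : ℕ := 4 * m ^ 2 * (8 * n + 1)

lemma ix_inj {m : ℕ} (hm : 0 < m) : Function.Injective (ix m) := by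
  intro a b h
  have : 8 * a + 1 = 8 * b + 1 := Nat.eq_of_mul_eq_mul_left (by positivity) h
  omega

open Classical in
/-- the coefficients of `f0` -/
noncomputable def a0 (m : ℕ) : ℕ → ℤ :=
  Function.extend (ix m) (fun n ↦ if (m : ℤ) ∣ ((4 * (8 * n + 1) : ℕ) : ℤ) then (bReg 4 n : ℤ) else 0) 0

lemma hasSum_a0 {m : ℕ} [NeZero m] {z : ℂ} (hz : 0 < z.im) :
    HasSum (fun n ↦ (a0 m n : ℂ) * Function.Periodic.qParam (32 * m ^ 2 : ℕ) z ^ n) (f0 m z) := by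
  have hm : (m : ℂ) ≠ 0 := by exact_mod_cast NeZero.ne m
  have hinj := ix_inj (m := m) (Nat.pos_of_ne_zero (NeZero.ne m))
  rw [← hinj.hasSum_iff]
  · convert! hasSum_f0 (m := m) hz using 1
    ext n
    simp only [Function.comp, a0, hinj.extend_apply, Function.Periodic.qParam, ← Complex.exp_nat_mul]
    push_cast
    refine congr_arg₂ _ rfl (congr_arg _ ?_)
    simp only [ix]
    push_cast
    field_simp
    ring
  · intro x hx
    rw [a0, Function.extend_apply' _ _ _ (by simpa using hx)]
    simp

/-- dilation of `HZ` -/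
noncomputable def HD (m : ℕ) : ℤ⟦X⟧ :=
  PowerSeries.mk fun n ↦ if 32 * m ^ 2 ∣ n then coeff (n / (32 * m ^ 2)) (HZ m) else 0

lemma HD_mod {m : ℕ} (hm : m.Prime) :
    PowerSeries.map (Int.castRingHom (ZMod m)) (HD m) = 1 := by
  have hpos : 0 < 32 * m ^ 2 := by have := hm.pos; positivity
  ext n
  rw [coeff_map, HD, coeff_mk, coeff_one]
  split_ifs with h1 h2 h2
  · rw [← coeff_map, HZ_mod hm, coeff_one, h2]; simp
  · rw [← coeff_map, HZ_mod hm, coeff_one, if_neg]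
    obtain ⟨d, rfl⟩ := h1
    rw [Nat.mul_div_cancel_left _ hpos]
    rintro rfl; simp at h2
  · subst h2; simp at h1
  · simp

lemma hasSum_HD {m : ℕ} [NeZero m] {z : ℂ} (hz : 0 < z.im) :
    HasSum (fun n ↦ coeff n (mapC (HD m)) * Function.Periodic.qParam (32 * m ^ 2 : ℕ) z ^ n)
      (DC z ^ (m ^ 2) / DC ((m ^ 2 : ℕ) * z)) := by
  have hm : 0 < m := Nat.pos_of_ne_zero (NeZero.ne m)
  have hmC : (m : ℂ) ≠ 0 := by exact_mod_cast NeZero.ne m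
  have hpos : 0 < 32 * m ^ 2 := by positivity
  have hw : Function.Periodic.qParam (32 * m ^ 2 : ℕ) z ^ (32 * m ^ 2) =
      Function.Periodic.qParam 1 z := by
    simp only [Function.Periodic.qParam, ← Complex.exp_nat_mul]
    refine congr_arg _ ?_
    push_cast
    field_simp
  have h := Rep_HZ hm _ (norm_q_lt hz)
  have e : (EA (Function.Periodic.qParam 1 z) ^ (m ^ 2)) ^ 24 *
      ((EA (Function.Periodic.qParam 1 z ^ (m ^ 2)))⁻¹) ^ 24 =
      DC z ^ (m ^ 2) / DC ((m ^ 2 : ℕ) * z) := by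
    have h24 : Function.Periodic.qParam 24 z ≠ 0 := Function.Periodic.qParam_ne_zero z
    rw [DC, DC, eta_eq, eta_eq, qParam_nat_mul, qParam_nat_mul]
    generalize EA (Function.Periodic.qParam 1 z ^ (m ^ 2)) = A
    generalize EA (Function.Periodic.qParam 1 z) = B
    generalize Function.Periodic.qParam 24 z = x at *
    rw [mul_pow, mul_pow, mul_pow, ← pow_mul x, ← pow_mul x, mul_comm 24 (m ^ 2),
      mul_div_mul_left _ _ (pow_ne_zero _ h24), inv_pow, div_eq_mul_inv, ← pow_mul, ← pow_mul,
      mul_comm 24 (m ^ 2)]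
  simp only [e] at h
  rw [← hw] at h
  convert! hasSum_dilate hpos _ _ _ h using 1
  ext n
  rw [HD, coeff_map, coeff_mk]
  split_ifs <;> simp

theorem exists_coeffs {m : ℕ} [NeZero m] (hm : m.Prime) :
    ∃ a : ℕ → ℤ, (∀ τ : UpperHalfPlane, HasSum
      (fun n ↦ (a n : ℂ) * Function.Periodic.qParam (32 * m ^ 2 : ℕ) (τ : ℂ) ^ n) (KC m τ)) ∧
      ∀ n, m ∣ 4 * (8 * n + 1) → (m : ℤ) ∣ a (ix m n) - bReg 4 n := by
  refine ⟨fun n ↦ coeff n (PowerSeries.mk (a0 m) * HD m), fun τ ↦ ?_, fun n hn ↦ ?_⟩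
  · have h1 : HasSum (fun n ↦ coeff n (mapC (PowerSeries.mk (a0 m))) *
        Function.Periodic.qParam (32 * m ^ 2 : ℕ) (τ : ℂ) ^ n) (f0 m τ) := by
      simpa only [coeff_map, coeff_mk, eq_intCast] using hasSum_a0 (m := m) τ.im_pos
    have h2 := hasSum_coeff_mul h1 (hasSum_HD (m := m) τ.im_pos)
    rw [← map_mul] at h2
    rw [KC]
    simpa only [coeff_map, eq_intCast] using h2
  · rw [← ZMod.intCast_zmod_eq_zero_iff_dvd]
    have h1 : ((coeff (ix m n) (PowerSeries.mk (a0 m) * HD m) : ℤ) : ZMod m) =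
        ((a0 m (ix m n) : ℤ) : ZMod m) := by
      rw [← eq_intCast (Int.castRingHom (ZMod m)), ← coeff_map, map_mul, HD_mod hm, mul_one,
        coeff_map, coeff_mk, eq_intCast]
    rw [Int.cast_sub, h1, a0, (ix_inj hm.pos).extend_apply, if_pos (by exact_mod_cast hn), sub_self]

end B4
end Part16

/-- For every prime `m`, there is a Ramanujan-type congruence
`b_4(An + B) ≡ 0 (mod m)`. -/
theorem b4_ramanujan_type (m : ℕ) (hm : m.Prime) :
    ∃ A B : ℕ, 0 < B ∧ B < A ∧ ∀ n : ℕ, bReg 4 (A * n + B) % m = 0 := by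
  have : NeZero m := ⟨hm.ne_zero⟩
  have hpos : 0 < 32 * m ^ 2 := by have := hm.pos; positivity
  have : NeZero (32 * m ^ 2) := ⟨hpos.ne.symm⟩
  have hm2 := hm.two_le
  obtain ⟨F, hF⟩ := B4.exists_form hm2
  obtain ⟨a, ha, hab⟩ := B4.exists_coeffs hm
  obtain ⟨Q, hQ, hQgt, hQ1⟩ := Nat.exists_prime_gt_modEq_one (k := 32 * m ^ 2) (32 * m ^ 2) hpos.ne.symm
  have hQN : ((Q : ℕ) : ZMod (32 * m ^ 2)) = 1 := by
    have := (ZMod.natCast_eq_natCast_iff _ _ _).mpr hQ1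
    simpa using this
  have hNQ : (32 * m ^ 2).Coprime Q :=
    ((Nat.Prime.coprime_iff_not_dvd hQ).mpr (Nat.not_dvd_of_pos_of_lt hpos hQgt)).symm
  have hmQ : m.Coprime Q := hNQ.coprime_dvd_left (by exact ⟨32 * m, by ring⟩)
  have hk : 0 < 12 * (m ^ 2 - 1) := by
    have : 4 ≤ m ^ 2 := by nlinarith
    omega
  obtain ⟨r, hr, hdiv⟩ := B4.hecke_main hm.pos hk hQ hNQ hmQ hQN F a (by
    intro τ; rw [hF]; exact ha τ)
  obtain ⟨ν, hν8, hνm, hνQ, hν0⟩ : ∃ ν, ν % 8 = 1 ∧ m ∣ 4 * ν ∧ ν.Coprime Q ∧ 0 < ν := by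
    rcases hm.eq_two_or_odd with h | h
    · exact ⟨1, rfl, by rw [h]; norm_num, Nat.coprime_one_left _, one_pos⟩
    · refine ⟨m ^ 2, ?_, ⟨4 * m, by ring⟩, Nat.Coprime.pow_left 2 hmQ, by positivity⟩
      have h8 : m % 8 = 1 ∨ m % 8 = 3 ∨ m % 8 = 5 ∨ m % 8 = 7 := by omega
      rcases h8 with h8 | h8 | h8 | h8 <;> simp [Nat.pow_mod, h8]
  have hQ8 : Q % 8 = 1 := by
    have : Q ≡ 1 [MOD 8] := hQ1.of_dvd ⟨4 * m ^ 2, by ring⟩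
    exact this
  have hc8 : (Q ^ r * ν) % 8 = 1 := by simp [Nat.mul_mod, Nat.pow_mod, hQ8, hν8]
  have hQ32 : 32 < Q := by nlinarith
  have hQr : Q ≤ Q ^ r := Nat.le_self_pow hr.ne.symm Q
  have hbig : 32 < Q ^ r * ν := by nlinarith
  refine ⟨Q ^ (r + 1) * ν, (Q ^ r * ν) / 8, by omega, ?_, fun n ↦ ?_⟩
  · have : Q ^ (r + 1) * ν = Q * (Q ^ r * ν) := by ring
    rw [this]
    calc (Q ^ r * ν) / 8 < Q ^ r * ν := by omega
      _ ≤ _ := Nat.le_mul_of_pos_left _ hQ.pos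
  · set n' := Q ^ (r + 1) * ν * n + (Q ^ r * ν) / 8 with hn'
    have h8n : 8 * n' + 1 = Q ^ r * (ν * (8 * Q * n + 1)) := by
      have h := Nat.div_add_mod (Q ^ r * ν) 8
      rw [hc8] at h
      calc 8 * n' + 1 = 8 * (Q ^ (r + 1) * ν * n) + (8 * (Q ^ r * ν / 8) + 1) := by rw [hn']; ring
        _ = _ := by rw [h]; ring
    have h1 : m ∣ 4 * (8 * n' + 1) := by
      rw [h8n]
      obtain ⟨c, hc⟩ := hνm
      exact ⟨c * (Q ^ r * (8 * Q * n + 1)), by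
        calc _ = (4 * ν) * (Q ^ r * (8 * Q * n + 1)) := by ring
          _ = _ := by rw [hc]; ring⟩
    have hix : B4.ix m n' = Q ^ r * (4 * m ^ 2 * (ν * (8 * Q * n + 1))) := by
      rw [B4.ix, h8n]; ring
    have hnd : ¬ Q ∣ 4 * m ^ 2 * (ν * (8 * Q * n + 1)) := by
      have c1 : (4 * m ^ 2).Coprime Q := hNQ.coprime_dvd_left ⟨8, by ring⟩
      have c2 : (8 * Q * n + 1).Coprime Q := by
        have : 8 * Q * n + 1 = 1 + Q * (8 * n) := by ring
        rw [this]; simp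
      have c3 := c1.mul_left (hνQ.mul_left c2)
      exact (Nat.Prime.coprime_iff_not_dvd hQ).mp c3.symm
    have h2 := hdiv _ hnd
    rw [← hix] at h2
    have h3 := hab n' h1
    have h4 : (m : ℤ) ∣ (bReg 4 n' : ℤ) := by
      have := dvd_sub h2 h3
      simpa using this
    exact Nat.mod_eq_zero_of_dvd (by exact_mod_cast h4)
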